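/- Let p_j denote the j-th prime, let d be an integer with p_j ≤ d ≤ p_{j+1}, and let α ∈ (0, 1/6) satisfy log(p_j)/log(p_{j+1}) > 6α. Then for every ε ∈ (0, 1) there exist a constant C > 0 and infinitely many positive integers m such that for each such m there is a (d+1)-regular finite simple graph G_m on m vertices satisfying: (1) girth(G_m) ≥ 2α·log_{2d-1}(m); and (2) the adjacency matrix A(G_m) has ⌊α·log_d(m)⌋ distinct eigenvalues, each admitting a (k, ε)-localized eigenvector for some k ≤ C·m^α. -/

import Mathlib

open Classical

set_option linter.unusedSectionVars false

noncomputable section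

namespace Formal

variable {V : Type*} [Fintype V] [DecidableEq V]

/-- The real adjacency matrix of a finite simple graph. -/
def adjMat (G : SimpleGraph V) : Matrix V V ℝ :=
  letI := Classical.decRel G.Adj
  SimpleGraph.adjMatrix ℝ G

lemma adjMat_isHermitian (G : SimpleGraph V) : (adjMat G).IsHermitian := by
  letI := Classical.decRel G.Adj
  unfold adjMat
  rw [Matrix.IsHermitian, Matrix.conjTranspose_eq_transpose_of_trivial]
  exact SimpleGraph.isSymm_adjMatrix G

/-- `G` is `k`-regular: every vertex has exactly `k` neighbours. -/
def IsRegular (G : SimpleGraph V) (k : ℕ) : Prop :=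
  ∀ v : V, (G.neighborSet v).ncard = k

/-- The eigenvalues (with multiplicity) of the adjacency matrix, indexed by vertices. -/
def eigs (G : SimpleGraph V) : V → ℝ :=
  (adjMat_isHermitian G).eigenvalues

/-- The absolute values of the adjacency eigenvalues, sorted in increasing order. -/
def sortedAbsEigs (G : SimpleGraph V) : List ℝ :=
  (Finset.univ.val.map fun i => |eigs G i|).sort (· ≤ ·)

/-- `λ(G)`: the second largest absolute value of an eigenvalue (with multiplicity). -/
def secondLargestAbsEig (G : SimpleGraph V) : ℝ :=
  (sortedAbsEigs G).getD (Fintype.card V - 2) 0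

/-- `λ₃(G)`: the third largest absolute value of an eigenvalue (with multiplicity). -/
def thirdLargestAbsEig (G : SimpleGraph V) : ℝ :=
  (sortedAbsEigs G).getD (Fintype.card V - 3) 0

/-- `μ` has a `(k, ε)`-localized (ℓ²-normalized) eigenvector for `A(G)`. -/
def HasLocalizedEigenvector (G : SimpleGraph V) (μ : ℝ) (k : ℕ) (ε : ℝ) : Prop :=
  ∃ v : V → ℝ, (adjMat G).mulVec v = μ • v ∧ (∑ x, (v x) ^ 2) = 1 ∧
    ∃ S : Finset V, S.card = k ∧ ε ≤ ∑ x ∈ S, (v x) ^ 2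

/-- There are `r` distinct eigenvalues of `A(G)`, each with a `(k, ε)`-localized
eigenvector for some `k ≤ bound`. -/
def LocalizedSpectrum (G : SimpleGraph V) (r : ℕ) (ε bound : ℝ) : Prop :=
  ∃ Λ : Finset ℝ, Λ.card = r ∧
    ∀ μ ∈ Λ, ∃ k : ℕ, (k : ℝ) ≤ bound ∧ HasLocalizedEigenvector G μ k ε

/-- `girth(G) ≥ x` for a real number `x` (`girth = ⊤` counts as `≥ x`). -/
def girthGe {W : Type*} (G : SimpleGraph W) (x : ℝ) : Prop :=
  ∀ g : ℕ, G.girth = g → x ≤ g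

/-- `girth(G) > x` for a real number `x` (`girth = ⊤` counts as `> x`). -/
def girthGt {W : Type*} (G : SimpleGraph W) (x : ℝ) : Prop :=
  ∀ g : ℕ, G.girth = g → x < g

/-- The `j`-th prime, so `nthPrime 1 = 2`, `nthPrime 2 = 3`, ..., `nthPrime 10 = 29`. -/
def nthPrime (j : ℕ) : ℕ :=
  Nat.nth Nat.Prime (j - 1)

section Girth

variable {U : Type*} {G : SimpleGraph U} {g : ℕ}

open SimpleGraph

/-- Every cycle of `G` has length at least `g`, expressed through the distance between the
endpoints of an edge after that edge is deleted. -/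
def GirthAtLeast (g : ℕ) (G : SimpleGraph U) : Prop :=
  ∀ u v, G.Adj u v → (g : ℕ∞) ≤ (G \ edge u v).edist u v + 1

lemma le_add_edist_of_forall_adj {φ : U → ℕ∞} (hφ : ∀ a b, G.Adj a b → φ b ≤ φ a + 1) (x y : U) :
    φ y ≤ φ x + G.edist x y := by
  have walk : ∀ {x y : U} (p : G.Walk x y), φ y ≤ φ x + p.length := by
    intro x y p
    induction p with
    | nil => simp
    | @cons a b c h p ih =>
      calc φ c ≤ φ b + p.length := ih
        _ ≤ φ a + 1 + p.length := by gcongr; exact hφ _ _ h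
        _ = φ a + (Walk.cons h p).length := by
          rw [Walk.length_cons]; push_cast; ring
  by_cases h : G.edist x y = ⊤
  · simp [h]
  · obtain ⟨p, hp⟩ := exists_walk_of_edist_ne_top h
    rw [← hp]
    exact walk p

lemma edist_le_edist_add_one (x : U) {a b : U} (h : G.Adj a b) :
    G.edist x b ≤ G.edist x a + 1 :=
  (SimpleGraph.edist_triangle (v := a)).trans (by gcongr; exact (edist_eq_one_iff_adj.2 h).le)

lemma min_le_edist_sup_edge (u v a b : U) :
    min (G.edist a b) (min (G.edist a u + 1 + G.edist v b) (G.edist a v + 1 + G.edist u b)) ≤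
      (G ⊔ edge u v).edist a b := by
  have key := le_add_edist_of_forall_adj (G := G ⊔ edge u v)
    (φ := fun b => min (G.edist a b)
      (min (G.edist a u + 1 + G.edist v b) (G.edist a v + 1 + G.edist u b))) ?_ a b
  · simpa using key
  intro p q hpq
  simp only [sup_adj, edge_adj] at hpq
  rcases hpq with h | ⟨⟨rfl, rfl⟩ | ⟨rfl, rfl⟩, -⟩
  · have h1 := edist_le_edist_add_one a h
    have h2 := edist_le_edist_add_one v h
    have h3 := edist_le_edist_add_one u h
    rw [min_add, min_add]
    refine min_le_min h1 (min_le_min ?_ ?_)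
    · rw [add_assoc (G.edist a u + 1)]; gcongr
    · rw [add_assoc (G.edist a v + 1)]; gcongr
  · rw [min_add, min_add]
    refine le_min ?_ (le_min ?_ ?_)
    · exact (min_le_right _ _).trans ((min_le_left _ _).trans (by simp))
    · refine (min_le_right _ _).trans ((min_le_left _ _).trans ?_)
      rw [SimpleGraph.edist_self, add_zero, add_assoc]
      exact le_self_add
    · refine (min_le_left _ _).trans ?_
      rw [add_assoc, add_assoc]
      exact le_self_add
  · rw [min_add, min_add]
    refine le_min ?_ (le_min ?_ ?_)
    · exact (min_le_right _ _).trans ((min_le_right _ _).trans (by simp))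
    · refine (min_le_left _ _).trans ?_
      rw [add_assoc, add_assoc]
      exact le_self_add
    · refine (min_le_right _ _).trans ((min_le_right _ _).trans ?_)
      rw [SimpleGraph.edist_self, add_zero, add_assoc]
      exact le_self_add

lemma GirthAtLeast.anti {G' : SimpleGraph U} (hG : GirthAtLeast g G) (h : G' ≤ G) :
    GirthAtLeast g G' := by
  intro u v huv
  refine (hG u v (h huv)).trans ?_
  exact add_le_add_left (edist_anti (sdiff_le_sdiff_right h)) 1

lemma GirthAtLeast.sup_edge (hG : GirthAtLeast g G) {u v : U}
    (huv : (g : ℕ∞) ≤ G.edist u v + 1) : GirthAtLeast g (G ⊔ edge u v) := by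
  have hnew : (g : ℕ∞) ≤ ((G ⊔ edge u v) \ edge u v).edist u v + 1 := by
    refine huv.trans ?_
    refine add_le_add_left (edist_anti ?_) 1
    rw [sup_sdiff_right_self]
    exact sdiff_le
  intro a b hab
  by_cases hE : (edge u v).Adj a b
  · rw [edge_adj] at hE
    rcases hE with ⟨⟨rfl, rfl⟩ | ⟨rfl, rfl⟩, -⟩
    · exact hnew
    · rw [edge_comm a b, SimpleGraph.edist_comm]
      exact hnew
  have hG' : G.Adj a b := by
    rw [sup_adj] at hab
    exact hab.resolve_right hE
  have h1 : (G ⊔ edge u v) \ edge a b ≤ (G \ edge a b) ⊔ edge u v := by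
    rw [sup_sdiff]
    exact sup_le_sup_left sdiff_le _
  have h2 : (g : ℕ∞) ≤ ((G \ edge a b) ⊔ edge u v).edist a b + 1 := by
    have h3 := min_le_edist_sup_edge (G := G \ edge a b) u v a b
    have hle : ∀ x y, G.edist x y ≤ (G \ edge a b).edist x y := fun x y => edist_anti sdiff_le
    have hab1 : G.edist a b = 1 := edist_eq_one_iff_adj.2 hG'
    refine le_trans ?_ (add_le_add_left h3 1)
    rw [min_add, min_add]
    refine le_min (hG a b hG') (le_min ?_ ?_)
    · refine huv.trans ?_
      gcongr
      calc G.edist u v ≤ G.edist u a + G.edist a v := SimpleGraph.edist_triangle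
        _ ≤ G.edist u a + (G.edist a b + G.edist b v) := by
          gcongr; exact SimpleGraph.edist_triangle
        _ = G.edist a u + 1 + G.edist v b := by
          rw [hab1, SimpleGraph.edist_comm (u := u), SimpleGraph.edist_comm (u := b), add_assoc]
        _ ≤ _ := by gcongr <;> exact sdiff_le
    · refine huv.trans ?_
      gcongr
      calc G.edist u v ≤ G.edist u b + G.edist b v := SimpleGraph.edist_triangle
        _ ≤ G.edist u b + (G.edist b a + G.edist a v) := by
          gcongr; exact SimpleGraph.edist_triangle
        _ = G.edist a v + 1 + G.edist u b := by
          rw [SimpleGraph.edist_comm (u := b), hab1]; ring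
        _ ≤ _ := by gcongr <;> exact sdiff_le
  refine h2.trans ?_
  exact add_le_add_left (edist_anti h1) 1

/-- Replacing an edge `z q` by the two edges `z₀ q` and `z q₀` creates no short cycle if `z` is
far from `z₀` and `q₀`. -/
lemma GirthAtLeast.switch (hG : GirthAtLeast g G) {z q z₀ q₀ : U} (hzq : G.Adj z q)
    (hz₀ : (g : ℕ∞) ≤ G.edist z z₀) (hq₀ : (g : ℕ∞) ≤ G.edist z q₀) :
    GirthAtLeast g (G \ edge z q ⊔ edge z₀ q ⊔ edge z q₀) := by
  have hle : ∀ x y, G.edist x y ≤ (G \ edge z q).edist x y := fun x y => edist_anti sdiff_le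
  have h1 : GirthAtLeast g (G \ edge z q ⊔ edge z₀ q) := by
    refine (hG.anti sdiff_le).sup_edge (hz₀.trans ?_)
    calc G.edist z z₀ ≤ G.edist z q + G.edist q z₀ := SimpleGraph.edist_triangle
      _ = G.edist z₀ q + 1 := by
        rw [edist_eq_one_iff_adj.2 hzq, SimpleGraph.edist_comm (u := q), add_comm]
      _ ≤ _ := by gcongr; exact sdiff_le
  refine h1.sup_edge ?_
  refine le_trans ?_ (add_le_add_left (min_le_edist_sup_edge (G := G \ edge z q) z₀ q z q₀) 1)
  rw [min_add, min_add]
  refine le_min ?_ (le_min ?_ ?_)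
  · exact hq₀.trans ((hle _ _).trans le_self_add)
  · refine hz₀.trans ((hle _ _).trans ?_)
    rw [add_assoc, add_assoc]
    exact le_self_add
  · refine (hG z q hzq).trans ?_
    rw [add_assoc]
    exact le_self_add

lemma GirthAtLeast.le_egirth (hG : GirthAtLeast g G) : (g : ℕ∞) ≤ G.egirth := by
  rw [SimpleGraph.le_egirth]
  intro a w hw
  cases w with
  | nil => simp at hw
  | @cons _ b _ h p =>
    rw [Walk.cons_isCycle_iff] at hw
    refine (hG a b h).trans ?_
    rw [Walk.length_cons]
    push_cast
    gcongr
    rw [SimpleGraph.edist_comm]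
    refine (Walk.edist_le (p.transfer (G \ edge a b) ?_)).trans (by rw [Walk.length_transfer])
    intro e he
    rw [edgeSet_sdiff]
    refine ⟨p.edges_subset_edgeSet he, fun hab => hw.2 ?_⟩
    rw [edge, edgeSet_fromEdgeSet] at hab
    have : e = s(a, b) := by simpa using hab.1
    exact this ▸ he

lemma GirthAtLeast.girthGe (hG : GirthAtLeast g G) (hcyc : ¬ G.IsAcyclic) {x : ℝ} (hx : x ≤ g) :
    girthGe G x := by
  intro k hk
  refine hx.trans ?_
  have h1 : G.egirth ≠ ⊤ := fun h => hcyc (egirth_eq_top.1 h)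
  have h2 : (g : ℕ∞) ≤ (G.egirth.toNat : ℕ) := by
    rw [ENat.natCast_toNat h1]
    exact hG.le_egirth
  have h3 : g ≤ G.girth := by exact_mod_cast h2
  rw [hk] at h3
  exact_mod_cast h3

end Girth

section Growth

open SimpleGraph

variable {U : Type*} [Fintype U] {G : SimpleGraph U}

lemma not_isAcyclic_of_two_le_ncard [Nonempty U] (h : ∀ v, 2 ≤ (G.neighborSet v).ncard) :
    ¬ G.IsAcyclic := by
  intro hG
  have paths : ∀ n : ℕ, ∃ (u v : U) (p : G.Walk u v), p.IsPath ∧ p.length = n := by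
    intro n
    induction n with
    | zero =>
      obtain ⟨u⟩ := ‹Nonempty U›
      exact ⟨u, u, Walk.nil, Walk.IsPath.nil, rfl⟩
    | succ n ih =>
      obtain ⟨u, v, p, hp, hn⟩ := ih
      obtain ⟨w, hw, hne⟩ := Set.exists_ne_of_one_lt_ncard (h u) p.snd
      have hmem : w ∉ p.support := fun hmem => hne (hG.eq_snd_of_adj_start hp hw hmem)
      exact ⟨w, v, Walk.cons (G.adj_symm hw) p, hp.cons hmem, by simp [hn]⟩
  obtain ⟨u, v, p, hp, hn⟩ := paths (Fintype.card U)
  exact (hp.length_lt).ne hn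

/-- A vertex at positive finite distance from `v₀` has a neighbour that is closer to `v₀`. -/
lemma exists_adj_edist_eq {U : Type*} {G : SimpleGraph U} {v₀ v : U} {n : ℕ}
    (hv : G.edist v₀ v = (n + 1 : ℕ)) : ∃ u, G.Adj u v ∧ G.edist v₀ u = n := by
  obtain ⟨p, hp⟩ := exists_walk_of_edist_eq_coe hv
  have hnil : ¬ p.Nil := by
    intro hnil
    have := Walk.length_eq_zero_iff.2 hnil
    omega
  refine ⟨p.penultimate, p.adj_penultimate hnil, le_antisymm ?_ ?_⟩
  · refine (Walk.edist_le p.dropLast).trans ?_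
    have := p.length_dropLast_add_one hnil
    exact_mod_cast (by omega)
  · have h1 := edist_le_edist_add_one v₀ (p.adj_penultimate hnil)
    rw [hv] at h1
    push_cast at h1
    exact (ENat.add_le_add_iff_right ENat.one_ne_top).1 h1

/-- The total weight of the edges leading from distance `n` to distance `n + 1` from `v₀` grows
at most geometrically if the weight leaving a vertex without backtracking is at most `x` times
the weight of the edge along which the vertex was entered. -/
lemma sum_weight_le_pow_mul {W : U → U → ℝ} (hW₀ : ∀ u v, 0 ≤ W u v) {x : ℝ} (hx : 0 ≤ x)
    (hW : ∀ u v, G.Adj u v → ∑ w with G.Adj v w ∧ w ≠ u, W v w ≤ x * W u v) (v₀ : U) (n : ℕ) :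
    ∑ v with G.edist v₀ v = (n + 1 : ℕ), ∑ u with G.Adj u v ∧ G.edist v₀ u = n, W u v ≤
      x ^ n * ∑ w with G.Adj v₀ w, W v₀ w := by
  induction n with
  | zero =>
    rw [pow_zero, one_mul]
    calc _ ≤ ∑ v with G.Adj v₀ v, ∑ u with G.Adj u v ∧ G.edist v₀ u = (0 : ℕ), W u v := by
          refine Finset.sum_le_sum_of_subset_of_nonneg ?_
            fun _ _ _ => Finset.sum_nonneg fun _ _ => hW₀ _ _
          intro v hv
          simpa [edist_eq_one_iff_adj] using hv
      _ ≤ _ := by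
          refine Finset.sum_le_sum fun v hv => ?_
          have : Finset.univ.filter (fun u => G.Adj u v ∧ G.edist v₀ u = (0 : ℕ)) ⊆ {v₀} := by
            intro u hu
            simp only [Finset.mem_filter, Nat.cast_zero, SimpleGraph.edist_eq_zero_iff] at hu
            simp [hu.2.2]
          exact (Finset.sum_le_sum_of_subset_of_nonneg this fun _ _ _ => hW₀ _ _).trans
            (by simp)
  | succ n ih =>
    have swap : ∑ v with G.edist v₀ v = (n + 1 + 1 : ℕ),
          ∑ u with G.Adj u v ∧ G.edist v₀ u = (n + 1 : ℕ), W u v =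
        ∑ u with G.edist v₀ u = (n + 1 : ℕ),
          ∑ v with G.Adj u v ∧ G.edist v₀ v = (n + 1 + 1 : ℕ), W u v := by
      refine Finset.sum_comm' fun v u => ?_
      simp only [Finset.mem_filter, Finset.mem_univ, true_and]
      tauto
    rw [swap, pow_succ', mul_assoc]
    refine le_trans ?_ (mul_le_mul_of_nonneg_left ih hx)
    rw [Finset.mul_sum]
    refine Finset.sum_le_sum fun v hv => ?_
    have hv' : G.edist v₀ v = (n + 1 : ℕ) := by simpa using hv
    obtain ⟨u, huv, hu⟩ := exists_adj_edist_eq hv'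
    calc ∑ w with G.Adj v w ∧ G.edist v₀ w = (n + 1 + 1 : ℕ), W v w
        ≤ ∑ w with G.Adj v w ∧ w ≠ u, W v w := by
          refine Finset.sum_le_sum_of_subset_of_nonneg ?_ fun _ _ _ => hW₀ _ _
          intro w hw
          simp only [Finset.mem_filter, Finset.mem_univ, true_and] at hw ⊢
          refine ⟨hw.1, ?_⟩
          rintro rfl
          rw [hu] at hw
          have := hw.2
          norm_cast at this
          omega
      _ ≤ x * W u v := hW u v huv
      _ ≤ _ := by
          refine mul_le_mul_of_nonneg_left ?_ hx
          exact Finset.single_le_sum (f := fun u => W u v) (fun _ _ => hW₀ _ _) (by simp [huv, hu])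

/-- A bound for the number of elements of `S` at distance less than `g` from `v₀`. -/
lemma card_near_le {W : U → U → ℝ} (hW₀ : ∀ u v, 0 ≤ W u v) {x : ℝ} (hx : 3 / 2 ≤ x)
    (hW : ∀ u v, G.Adj u v → ∑ w with G.Adj v w ∧ w ≠ u, W v w ≤ x * W u v) (S : Finset U)
    (hS : ∀ u, ∀ v ∈ S, G.Adj u v → 1 ≤ W u v) (v₀ : U) {K : ℝ}
    (hK : ∑ w with G.Adj v₀ w, W v₀ w ≤ K) (g : ℕ) :
    ((S.filter fun v => G.edist v₀ v < g).card : ℝ) ≤ 1 + 2 * K * x ^ g := by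
  have hK₀ : 0 ≤ K := (Finset.sum_nonneg fun _ _ => hW₀ _ _).trans hK
  have sphere : ∀ n : ℕ, ((S.filter fun v => G.edist v₀ v = (n + 1 : ℕ)).card : ℝ) ≤
      x ^ n * K := by
    intro n
    refine le_trans ?_ ((sum_weight_le_pow_mul hW₀ (by linarith) hW v₀ n).trans
      (mul_le_mul_of_nonneg_left hK (by positivity)))
    calc ((S.filter fun v => G.edist v₀ v = (n + 1 : ℕ)).card : ℝ)
        = ∑ v ∈ S.filter fun v => G.edist v₀ v = (n + 1 : ℕ), (1 : ℝ) := by simp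
      _ ≤ ∑ v ∈ S.filter fun v => G.edist v₀ v = (n + 1 : ℕ),
            ∑ u with G.Adj u v ∧ G.edist v₀ u = n, W u v := by
          refine Finset.sum_le_sum fun v hv => ?_
          rw [Finset.mem_filter] at hv
          obtain ⟨u, hadj, hdist⟩ := exists_adj_edist_eq hv.2
          exact (hS _ v hv.1 hadj).trans (Finset.single_le_sum (f := fun u => W u v)
            (fun _ _ => hW₀ _ _) (by simp [hadj, hdist]))
      _ ≤ _ := Finset.sum_le_sum_of_subset_of_nonneg (Finset.filter_subset_filter _
            (Finset.subset_univ _)) fun _ _ _ => Finset.sum_nonneg fun _ _ => hW₀ _ _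
  have ball : ∀ n : ℕ, ((S.filter fun v => G.edist v₀ v < (n + 1 : ℕ)).card : ℝ) ≤
      1 + K * (2 * x ^ n - 2) := by
    intro n
    induction n with
    | zero =>
      have : (S.filter fun v => G.edist v₀ v < (0 + 1 : ℕ)) ⊆ {v₀} := by
        intro v hv
        simp only [Finset.mem_filter, zero_add, Nat.cast_one, Order.lt_one_iff,
          SimpleGraph.edist_eq_zero_iff] at hv
        simp [hv.2]
      have := Finset.card_le_card this
      rw [Finset.card_singleton] at this
      have : ((S.filter fun v => G.edist v₀ v < (0 + 1 : ℕ)).card : ℝ) ≤ 1 := by exact_mod_cast this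
      simpa using this
    | succ n ih =>
      have hsub : (S.filter fun v => G.edist v₀ v < (n + 1 + 1 : ℕ)) ⊆
          (S.filter fun v => G.edist v₀ v < (n + 1 : ℕ)) ∪
            (S.filter fun v => G.edist v₀ v = (n + 1 : ℕ)) := by
        intro v hv
        simp only [Finset.mem_filter, Finset.mem_union] at hv ⊢
        have : G.edist v₀ v ≤ (n + 1 : ℕ) := by
          have h := hv.2
          push_cast at h ⊢
          exact ENat.lt_add_one_iff (by simp) |>.1 h
        rcases this.lt_or_eq with h | h
        · exact Or.inl ⟨hv.1, h⟩
        · exact Or.inr ⟨hv.1, h⟩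
      have h1 := (Finset.card_le_card hsub).trans (Finset.card_union_le _ _)
      have h2 : ((S.filter fun v => G.edist v₀ v < (n + 1 + 1 : ℕ)).card : ℝ) ≤
          (S.filter fun v => G.edist v₀ v < (n + 1 : ℕ)).card +
            (S.filter fun v => G.edist v₀ v = (n + 1 : ℕ)).card := by exact_mod_cast h1
      have h3 : K * (3 / 2 * x ^ n) ≤ K * x ^ (n + 1) := by
        rw [pow_succ']
        gcongr
      have := sphere n
      nlinarith
  have hxg : 0 ≤ x ^ g := by positivity
  cases g with
  | zero => simp; positivity
  | succ g =>
    refine (ball g).trans ?_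
    have : K * x ^ g ≤ K * x ^ (g + 1) := by
      gcongr
      · linarith
      · omega
    nlinarith

end Growth

section Completion

open SimpleGraph

variable {U : Type*} [Fintype U]

/-- The graph obtained from `F` by adding the pairs in `E` as edges. -/
def addPairs (F : SimpleGraph U) (E : Finset (U × U)) : SimpleGraph U :=
  F ⊔ fromRel fun u v => (u, v) ∈ E

/-- The number of pairs in `E` that contain `v`. -/
def pairDegree (E : Finset (U × U)) (v : U) : ℕ :=
  (E.filter fun e => e.1 = v ∨ e.2 = v).card

lemma addPairs_adj {F : SimpleGraph U} {E : Finset (U × U)} {u v : U} :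
    (addPairs F E).Adj u v ↔ F.Adj u v ∨ (u ≠ v ∧ ((u, v) ∈ E ∨ (v, u) ∈ E)) := by
  simp [addPairs]

lemma ncard_neighborSet_addPairs {F : SimpleGraph U} {A B : Finset U} (hAB : Disjoint A B)
    {E : Finset (U × U)} (hE : E ⊆ A ×ˢ B) (hEF : ∀ e ∈ E, ¬ F.Adj e.1 e.2) (v : U) :
    ((addPairs F E).neighborSet v).ncard = (F.neighborSet v).ncard + pairDegree E v := by
  have hne : ∀ {a b}, (a, b) ∈ E → a ≠ b := by
    rintro a b hab rfl
    have := Finset.mem_product.1 (hE hab)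
    exact Finset.disjoint_left.1 hAB this.1 this.2
  have hset : (addPairs F E).neighborSet v = F.neighborSet v ∪
      ((E.filter fun e => e.1 = v ∨ e.2 = v).image
        fun e => if e.1 = v then e.2 else e.1 : Finset U) := by
    ext w
    simp only [mem_neighborSet, addPairs_adj, Set.mem_union, Finset.coe_image, Finset.coe_filter,
      Set.mem_image, Set.mem_ofPred_eq, Prod.exists]
    refine or_congr Iff.rfl ⟨?_, ?_⟩
    · rintro ⟨-, h | h⟩
      · exact ⟨v, w, ⟨h, Or.inl rfl⟩, by simp⟩
      · exact ⟨w, v, ⟨h, Or.inr rfl⟩, by simp [hne h]⟩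
    · rintro ⟨a, b, ⟨hab, rfl | rfl⟩, h⟩
      · rw [if_pos rfl] at h
        subst h
        exact ⟨hne hab, Or.inl hab⟩
      · rw [if_neg (hne hab)] at h
        subst h
        exact ⟨(hne hab).symm, Or.inr hab⟩
  rw [hset, Set.ncard_union_eq, Set.ncard_coe_finset, Finset.card_image_of_injOn]
  · rfl
  · rintro ⟨a, b⟩ hab ⟨a', b'⟩ hab' h
    simp only [Finset.coe_filter, Set.mem_ofPred_eq] at hab hab' h
    have h1 := Finset.mem_product.1 (hE hab.1)
    have h2 := Finset.mem_product.1 (hE hab'.1)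
    have h3 := hne hab.1
    have h4 := hne hab'.1
    have h5 : ∀ x ∈ A, x ∉ B := fun x hx => Finset.disjoint_left.1 hAB hx
    grind
  · rw [Set.disjoint_left]
    intro w hw hw'
    simp only [Finset.coe_image, Finset.coe_filter, Set.mem_image, Set.mem_ofPred_eq,
      Prod.exists] at hw'
    obtain ⟨a, b, ⟨hab, rfl | rfl⟩, h⟩ := hw'
    · rw [if_pos rfl] at h
      subst h
      exact hEF _ hab hw
    · rw [if_neg (hne hab)] at h
      subst h
      exact hEF _ hab (F.adj_symm hw)

lemma sum_pairDegree_left {A B : Finset U} (hAB : Disjoint A B) {E : Finset (U × U)}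
    (hE : E ⊆ A ×ˢ B) : ∑ v ∈ A, pairDegree E v = E.card := by
  rw [Finset.card_eq_sum_card_fiberwise (f := Prod.fst) (t := A)
    fun e he => (Finset.mem_product.1 (hE he)).1]
  refine Finset.sum_congr rfl fun v hv => congrArg _ (Finset.filter_congr fun e he => ?_)
  refine or_iff_left ?_
  rintro rfl
  exact Finset.disjoint_left.1 hAB hv (Finset.mem_product.1 (hE he)).2

lemma sum_pairDegree_right {A B : Finset U} (hAB : Disjoint A B) {E : Finset (U × U)}
    (hE : E ⊆ A ×ˢ B) : ∑ v ∈ B, pairDegree E v = E.card := by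
  rw [Finset.card_eq_sum_card_fiberwise (f := Prod.snd) (t := B)
    fun e he => (Finset.mem_product.1 (hE he)).2]
  refine Finset.sum_congr rfl fun v hv => congrArg _ (Finset.filter_congr fun e he => ?_)
  refine or_iff_right ?_
  rintro rfl
  exact Finset.disjoint_left.1 hAB (Finset.mem_product.1 (hE he)).1 hv

lemma pairDegree_insert_le (E : Finset (U × U)) (e : U × U) (v : U) :
    pairDegree (insert e E) v ≤ pairDegree E v + if e.1 = v ∨ e.2 = v then 1 else 0 := by
  unfold pairDegree
  rw [Finset.filter_insert]
  split_ifs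
  · exact Finset.card_insert_le _ _
  · simp

lemma pairDegree_erase_add {E : Finset (U × U)} {e : U × U} (he : e ∈ E) (v : U) :
    pairDegree (E.erase e) v + (if e.1 = v ∨ e.2 = v then 1 else 0) = pairDegree E v := by
  unfold pairDegree
  rw [Finset.filter_erase]
  split_ifs with h
  · exact Finset.card_erase_add_one (by simp [he, h])
  · rw [Finset.erase_eq_of_notMem (by simp [h]), add_zero]

/-- The sets of pairs that may be added to `F`: pairs in `A ×ˢ B` that are not yet edges, with
every vertex `v` in at most `r v` of them, that create no cycle of length less than `g`. -/
structure Admissible (F : SimpleGraph U) (A B : Finset U) (r : U → ℕ) (g : ℕ)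
    (E : Finset (U × U)) : Prop where
  subset : E ⊆ A ×ˢ B
  not_adj : ∀ e ∈ E, ¬ F.Adj e.1 e.2
  degree_le : ∀ v, pairDegree E v ≤ r v ∨ (v ∉ A ∧ v ∉ B)
  girth : GirthAtLeast g (addPairs F E)

lemma Admissible.insert_pair {F : SimpleGraph U} {A B : Finset U} {r : U → ℕ} {g : ℕ}
    {E : Finset (U × U)} (hE : Admissible F A B r g E) (hg : 3 ≤ g) {z q : U} (hz : z ∈ A)
    (hq : q ∈ B) (hzr : pairDegree E z < r z) (hqr : pairDegree E q < r q)
    (hfar : (g : ℕ∞) ≤ (addPairs F E).edist z q) :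
    Admissible F A B r g (insert (z, q) E) ∧ (z, q) ∉ E := by
  have hadj : ¬ (addPairs F E).Adj z q := by
    intro h
    rw [edist_eq_one_iff_adj.2 h] at hfar
    have : g ≤ 1 := by exact_mod_cast hfar
    omega
  have hne : z ≠ q := by
    rintro rfl
    rw [SimpleGraph.edist_self] at hfar
    have : g ≤ 0 := by exact_mod_cast hfar
    omega
  rw [addPairs_adj] at hadj
  push Not at hadj
  refine ⟨⟨?_, ?_, ?_, ?_⟩, (hadj.2 hne).1⟩
  · exact Finset.insert_subset (Finset.mem_product.2 ⟨hz, hq⟩) hE.subset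
  · intro e he
    rcases Finset.mem_insert.1 he with rfl | he
    · exact hadj.1
    · exact hE.not_adj e he
  · intro v
    have h1 := pairDegree_insert_le E (z, q) v
    have h2 := hE.degree_le v
    grind
  · refine (hE.girth.sup_edge (hfar.trans le_self_add)).anti ?_
    intro a b hab
    rw [addPairs_adj] at hab
    rw [sup_adj, addPairs_adj, edge_adj]
    grind

lemma Admissible.switch {F : SimpleGraph U} {A B : Finset U} {r : U → ℕ} {g : ℕ}
    {E : Finset (U × U)} (hAB : Disjoint A B) (hE : Admissible F A B r g E) (hg : 3 ≤ g)
    {z q z₀ q₀ : U} (hzq : (z, q) ∈ E) (hz₀ : z₀ ∈ A) (hq₀ : q₀ ∈ B)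
    (hzr : pairDegree E z₀ < r z₀) (hqr : pairDegree E q₀ < r q₀)
    (hfar₁ : (g : ℕ∞) ≤ (addPairs F E).edist z z₀)
    (hfar₂ : (g : ℕ∞) ≤ (addPairs F E).edist z q₀) :
    ∃ E', Admissible F A B r g E' ∧ E.card < E'.card := by
  have hdisj : ∀ x ∈ A, x ∉ B := fun x hx => Finset.disjoint_left.1 hAB hx
  obtain ⟨hz, hq⟩ := Finset.mem_product.1 (hE.subset hzq)
  have hadj : (addPairs F E).Adj z q := addPairs_adj.2
    (Or.inr ⟨fun h => hdisj z hz (h ▸ hq), Or.inl hzq⟩)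
  have hdist := edist_eq_one_iff_adj.2 hadj
  have small : ∀ k : ℕ, (g : ℕ∞) ≤ k → g ≤ k := fun k hk => by exact_mod_cast hk
  have hzz₀ : z ≠ z₀ := by
    rintro rfl
    rw [SimpleGraph.edist_self] at hfar₁
    have := small 0 hfar₁
    omega
  have hqq₀ : q ≠ q₀ := by
    rintro rfl
    rw [hdist] at hfar₂
    have := small 1 hfar₂
    omega
  have hadj₁ : ¬ (addPairs F E).Adj z₀ q := by
    intro h
    have h1 := hfar₁.trans (edist_le_edist_add_one z h.symm)
    rw [hdist] at h1
    have := small 2 (h1.trans (by norm_num))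
    omega
  have hadj₂ : ¬ (addPairs F E).Adj z q₀ := by
    intro h
    rw [edist_eq_one_iff_adj.2 h] at hfar₂
    have := small 1 hfar₂
    omega
  have hgirth := hE.girth.switch hadj hfar₁ hfar₂
  rw [addPairs_adj] at hadj₁ hadj₂
  push Not at hadj₁ hadj₂
  have hn₁ : (z₀, q) ∉ E := (hadj₁.2 fun h => hdisj z₀ hz₀ (h ▸ hq)).1
  have hn₂ : (z, q₀) ∉ E := (hadj₂.2 fun h => hdisj z hz (h ▸ hq₀)).1
  refine ⟨insert (z₀, q) (insert (z, q₀) (E.erase (z, q))), ⟨?_, ?_, ?_, ?_⟩, ?_⟩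
  · refine Finset.insert_subset (Finset.mem_product.2 ⟨hz₀, hq⟩)
      (Finset.insert_subset (Finset.mem_product.2 ⟨hz, hq₀⟩)
        ((Finset.erase_subset _ _).trans hE.subset))
  · intro e he
    rcases Finset.mem_insert.1 he with rfl | he
    · exact hadj₁.1
    rcases Finset.mem_insert.1 he with rfl | he
    · exact hadj₂.1
    · exact hE.not_adj e (Finset.mem_of_mem_erase he)
  · intro v
    have h1 := pairDegree_insert_le (insert (z, q₀) (E.erase (z, q))) (z₀, q) v
    have h2 := pairDegree_insert_le (E.erase (z, q)) (z, q₀) v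
    have h3 := pairDegree_erase_add hzq v
    have h4 := hE.degree_le v
    have h5 := hdisj v
    have h6 : z ≠ q := fun h => hdisj z hz (h ▸ hq)
    have h7 : z₀ ≠ q := fun h => hdisj z₀ hz₀ (h ▸ hq)
    have h8 : z ≠ q₀ := fun h => hdisj z hz (h ▸ hq₀)
    have h9 : z₀ ≠ q₀ := fun h => hdisj z₀ hz₀ (h ▸ hq₀)
    grind
  · refine hgirth.anti ?_
    intro a b hab
    rw [addPairs_adj] at hab
    rw [sup_adj, sup_adj, sdiff_adj, addPairs_adj, edge_adj, edge_adj, edge_adj]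
    have hF := hE.not_adj _ hzq
    have hF' : ¬ F.Adj q z := fun h => hF h.symm
    have hqz : (q, z) ∉ E := fun h => hdisj q (Finset.mem_product.1 (hE.subset h)).1 hq
    grind
  · have h1 : (z, q₀) ∉ E.erase (z, q) := fun h => hn₂ (Finset.mem_of_mem_erase h)
    have h2 : (z₀, q) ∉ insert (z, q₀) (E.erase (z, q)) := by
      rw [Finset.mem_insert]
      rintro (h | h)
      · exact hzz₀ (Prod.mk.inj h).1.symm
      · exact hn₁ (Finset.mem_of_mem_erase h)
    rw [Finset.card_insert_of_notMem h2, Finset.card_insert_of_notMem h1,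
      Finset.card_erase_add_one hzq]
    omega

/-- A graph can be completed to prescribed degrees by edges between `A` and `B`, without creating
cycles of length less than `g`, if there is always enough room far away from any two vertices. -/
theorem exists_completion {F : SimpleGraph U} {g : ℕ} (hg : 3 ≤ g) {A B : Finset U}
    (hAB : Disjoint A B) {r : U → ℕ} (hr : ∑ v ∈ A, r v = ∑ v ∈ B, r v) (hF : GirthAtLeast g F)
    (far : ∀ G : SimpleGraph U, F ≤ G →
      (∀ u v, G.Adj u v → F.Adj u v ∨ (u ∈ A ∧ v ∈ B) ∨ (u ∈ B ∧ v ∈ A)) →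
      (∀ v, v ∈ A ∨ v ∈ B → (G.neighborSet v).ncard ≤ (F.neighborSet v).ncard + r v) →
      ∀ a ∈ A, ∀ b ∈ B, ∃ z ∈ A, 0 < r z ∧ (g : ℕ∞) ≤ G.edist z a ∧ (g : ℕ∞) ≤ G.edist z b) :
    ∃ G : SimpleGraph U, F ≤ G ∧
      (∀ u v, G.Adj u v → F.Adj u v ∨ (u ∈ A ∧ v ∈ B) ∨ (u ∈ B ∧ v ∈ A)) ∧
      (∀ v, v ∈ A ∨ v ∈ B → (G.neighborSet v).ncard = (F.neighborSet v).ncard + r v) ∧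
      GirthAtLeast g G := by
  have hempty : Admissible F A B r g ∅ := by
    refine ⟨by simp, by simp, fun v => Or.inl (by simp [pairDegree]), hF.anti ?_⟩
    intro a b hab
    simpa [addPairs_adj] using hab
  obtain ⟨E, hE, hmax⟩ := Finset.exists_max_image
    (Finset.univ.filter fun E : Finset (U × U) => Admissible F A B r g E) Finset.card
    ⟨∅, by simpa using hempty⟩
  simp only [Finset.mem_filter, Finset.mem_univ, true_and] at hE hmax
  have hle : F ≤ addPairs F E := le_sup_left
  have hcases : ∀ u v, (addPairs F E).Adj u v →
      F.Adj u v ∨ (u ∈ A ∧ v ∈ B) ∨ (u ∈ B ∧ v ∈ A) := by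
    intro u v huv
    rw [addPairs_adj] at huv
    rcases huv with h | ⟨-, h | h⟩
    · exact Or.inl h
    · exact Or.inr (Or.inl (Finset.mem_product.1 (hE.subset h)))
    · exact Or.inr (Or.inr (Finset.mem_product.1 (hE.subset h)).symm)
  have hdeg := ncard_neighborSet_addPairs hAB hE.subset hE.not_adj
  have hdeg_le : ∀ v, v ∈ A ∨ v ∈ B → pairDegree E v ≤ r v := by
    intro v hv
    have := hE.degree_le v
    tauto
  refine ⟨addPairs F E, hle, hcases, ?_, hE.girth⟩
  have saturated : ¬ ∃ a ∈ A, ∃ b ∈ B, pairDegree E a < r a ∧ pairDegree E b < r b := by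
    rintro ⟨z₀, hz₀, q₀, hq₀, hzr, hqr⟩
    obtain ⟨z, hz, hrz, hfar₁, hfar₂⟩ := far (addPairs F E) hle hcases
      (fun v hv => by rw [hdeg]; exact Nat.add_le_add_left (hdeg_le v hv) _) z₀ hz₀ q₀ hq₀
    rcases (hdeg_le z (Or.inl hz)).lt_or_eq with hlt | heq
    · obtain ⟨h1, h2⟩ := hE.insert_pair hg hz hq₀ hlt hqr hfar₂
      have := hmax _ h1
      rw [Finset.card_insert_of_notMem h2] at this
      omega
    · obtain ⟨⟨a, q⟩, he⟩ : (E.filter fun e => e.1 = z ∨ e.2 = z).Nonempty := by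
        rw [← Finset.card_pos]
        exact hrz.trans_eq heq.symm
      rw [Finset.mem_filter] at he
      have haz : a = z := by
        refine he.2.resolve_right ?_
        rintro rfl
        exact Finset.disjoint_left.1 hAB hz (Finset.mem_product.1 (hE.subset he.1)).2
      subst haz
      obtain ⟨E', h1, h2⟩ := hE.switch hAB hg he.1 hz₀ hq₀ hzr hqr hfar₁ hfar₂
      exact absurd (hmax E' h1) (by omega)
  have hA := sum_pairDegree_left hAB hE.subset
  have hB := sum_pairDegree_right hAB hE.subset
  have full : ∀ v, v ∈ A ∨ v ∈ B → pairDegree E v = r v := by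
    by_contra! hcon
    obtain ⟨v, hv, hne⟩ := hcon
    have hlt := lt_of_le_of_ne (hdeg_le v hv) hne
    refine saturated ?_
    rcases hv with hv | hv
    · have h1 : ∑ v ∈ A, pairDegree E v < ∑ v ∈ A, r v :=
        Finset.sum_lt_sum (fun v hv => hdeg_le v (Or.inl hv)) ⟨v, hv, hlt⟩
      obtain ⟨b, hb, hb'⟩ := Finset.exists_lt_of_sum_lt (show ∑ v ∈ B, pairDegree E v < ∑ v ∈ B, r v by
        omega)
      exact ⟨v, hv, b, hb, hlt, hb'⟩
    · have h1 : ∑ v ∈ B, pairDegree E v < ∑ v ∈ B, r v :=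
        Finset.sum_lt_sum (fun v hv => hdeg_le v (Or.inr hv)) ⟨v, hv, hlt⟩
      obtain ⟨a, ha, ha'⟩ := Finset.exists_lt_of_sum_lt (show ∑ v ∈ A, pairDegree E v < ∑ v ∈ A, r v by
        omega)
      exact ⟨a, ha, v, hv, ha', hlt⟩
  intro v hv
  rw [hdeg, full v hv]

end Completion

section Levels

open SimpleGraph

variable {U : Type*} [Fintype U]

lemma sum_le_of_unique_exception {S : Finset U} {up : U → Prop} [DecidablePred up] {a b : ℝ}
    (hb : 0 ≤ b) (hba : b ≤ a) (hup : ∀ u ∈ S, ∀ v ∈ S, up u → up v → u = v) {k : ℕ}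
    (hk : S.card ≤ k + 1) :
    ∑ w ∈ S, (if up w then a else b) ≤ a + k * b := by
  by_cases h : ∃ u ∈ S, up u
  · obtain ⟨u, hu, hup'⟩ := h
    rw [← Finset.add_sum_erase S _ hu, if_pos hup']
    gcongr
    calc ∑ w ∈ S.erase u, (if up w then a else b) ≤ ∑ w ∈ S.erase u, b := by
          refine Finset.sum_le_sum fun w hw => ?_
          rw [if_neg fun h => Finset.ne_of_mem_erase hw
            (hup _ (Finset.mem_of_mem_erase hw) _ hu h hup')]
      _ = (S.erase u).card * b := by simp
      _ ≤ k * b := by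
          gcongr
          rw [Finset.card_erase_of_mem hu]
          omega
  · push Not at h
    calc ∑ w ∈ S, (if up w then a else b) = ∑ w ∈ S, b :=
          Finset.sum_congr rfl fun w hw => if_neg (h w hw)
      _ = S.card * b := by simp
      _ ≤ ((k + 1 : ℕ) : ℝ) * b := by gcongr
      _ ≤ a + k * b := by push_cast; linarith

lemma card_filter_adj_eq_ncard (G : SimpleGraph U) (v : U) :
    (Finset.univ.filter fun w => G.Adj v w).card = (G.neighborSet v).ncard := by
  rw [← Set.ncard_coe_finset]
  congr 1
  ext w
  simp

/-- If edges join consecutive levels, every vertex above the last level has at most one neighbour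
on the previous level, and degrees are at most `d + 1`, resp. at most `2` on the last level, then
there are few vertices of the last level near a vertex of one of the last two levels. -/
lemma card_last_level_near_le {G : SimpleGraph U} {d ℓ : ℕ} (hd : 2 ≤ d)
    {level : U → ℕ} (hlevel : ∀ v, level v ≤ ℓ)
    (hadj : ∀ u v, G.Adj u v → level v = level u + 1 ∨ level u = level v + 1)
    (hdeg : ∀ v, level v < ℓ → (G.neighborSet v).ncard ≤ d + 1)
    (hleaf : ∀ v, level v = ℓ → (G.neighborSet v).ncard ≤ 2)
    (hup : ∀ v u u', level v < ℓ → G.Adj v u → G.Adj v u' → level u < level v →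
      level u' < level v → u = u')
    (v₀ : U) (hv₀ : ℓ ≤ level v₀ + 1) (g : ℕ) :
    (((Finset.univ.filter fun v => level v = ℓ).filter fun v => G.edist v₀ v < g).card : ℝ) ≤
      1 + 4 * d * √(2 * d - 1) ^ g := by
  have hd' : (2 : ℝ) ≤ d := by exact_mod_cast hd
  set x : ℝ := √(2 * d - 1) with hx
  have hx2 : x ^ 2 = 2 * d - 1 := Real.sq_sqrt (by linarith)
  have hx32 : 3 / 2 ≤ x := by
    refine Real.le_sqrt_of_sq_le ?_
    norm_num
    linarith
  have hx0 : 0 < x := by linarith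
  have hxd : x ≤ d := by
    refine Real.sqrt_le_iff.2 ⟨by linarith, ?_⟩
    nlinarith [sq_nonneg ((d : ℝ) - 1)]
  set t : ℝ := d / x with ht
  have ht0 : 0 < t := by positivity
  have hxt : x * t = d := by rw [ht]; field_simp
  set c : ℝ := x ^ 2 / d with hc
  have hc0 : 0 < c := by positivity
  have hct : c * t = x := by rw [hc, ht]; field_simp
  have hct2 : c * t ^ 2 = d := by rw [pow_two, ← mul_assoc, hct, hxt]
  have hxct : x * c * t = 2 * d - 1 := by rw [mul_assoc, hct, ← pow_two, hx2]
  set W : U → U → ℝ := fun u v =>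
    if level v < level u then c * t ^ (ℓ - level v) else t ^ (ℓ - level v) with hW
  have hW₀ : ∀ u v, 0 ≤ W u v := by
    intro u v
    simp only [hW]
    split_ifs <;> positivity
  have out : ∀ v h, level v + (h + 1) = ℓ → ∀ (S : Finset U) (k : ℕ), (∀ w ∈ S, G.Adj v w) →
      S.card ≤ k + 1 → ∑ w ∈ S, W v w ≤ t ^ h * (d + k) := by
    intro v h hv S k hS hk
    have h1 : ∀ w ∈ S, W v w = if level w < level v then c * t ^ (h + 2) else t ^ h := by
      intro w hw
      simp only [hW]
      rcases hadj v w (hS w hw) with h' | h'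
      · rw [if_neg (by omega), if_neg (by omega), show ℓ - level w = h by omega]
      · rw [if_pos (by omega), if_pos (by omega), show ℓ - level w = h + 2 by omega]
    have h2 : c * t ^ (h + 2) = t ^ h * d := by rw [← hct2]; ring
    rw [Finset.sum_congr rfl h1]
    refine (sum_le_of_unique_exception (up := fun w => level w < level v) (a := c * t ^ (h + 2))
      (b := t ^ h) (by positivity) ?_ ?_ hk).trans ?_
    · rw [h2]
      exact le_mul_of_one_le_right (by positivity) (by linarith)
    · intro u hu u' hu' h3 h4
      exact hup v u u' (by omega) (hS u hu) (hS u' hu') h3 h4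
    · rw [h2]
      exact le_of_eq (by ring)
  have leaf_out : ∀ v, level v = ℓ → ∀ w, G.Adj v w → W v w = x := by
    intro v hv w hvw
    have h1 := hlevel w
    have h2 : level v = level w + 1 := (hadj v w hvw).resolve_left (by omega)
    simp only [hW]
    rw [if_pos (by omega), show ℓ - level w = 1 by omega, pow_one, hct]
  have hstep : ∀ u v, G.Adj u v → ∑ w with G.Adj v w ∧ w ≠ u, W v w ≤ x * W u v := by
    intro u v huv
    have hfilter : (Finset.univ.filter fun w => G.Adj v w ∧ w ≠ u) =
        (Finset.univ.filter fun w => G.Adj v w).erase u := by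
      ext w
      simp [and_comm]
    have hcard : (Finset.univ.filter fun w => G.Adj v w ∧ w ≠ u).card + 1 =
        (G.neighborSet v).ncard := by
      rw [hfilter, Finset.card_erase_add_one (by simpa using huv.symm), card_filter_adj_eq_ncard]
    rcases (hlevel v).lt_or_eq with hv | hv
    · obtain ⟨h, hh⟩ : ∃ h, level v + (h + 1) = ℓ := ⟨ℓ - level v - 1, by omega⟩
      have h1 := hdeg v hv
      rcases hadj u v huv with h2 | h2
      · have hWuv : W u v = t ^ (h + 1) := by
          simp only [hW]
          rw [if_neg (by omega), show ℓ - level v = h + 1 by omega]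
        have h3 : ∀ w ∈ Finset.univ.filter fun w => G.Adj v w ∧ w ≠ u, W v w = t ^ h := by
          intro w hw
          simp only [Finset.mem_filter, Finset.mem_univ, true_and] at hw
          have h4 : ¬ level w < level v := fun h5 =>
            hw.2 (hup v w u hv hw.1 huv.symm h5 (by omega))
          have h5 := hadj v w hw.1
          simp only [hW]
          rw [if_neg h4, show ℓ - level w = h by omega]
        rw [Finset.sum_congr rfl h3, hWuv, Finset.sum_const, nsmul_eq_mul]
        calc ((Finset.univ.filter fun w => G.Adj v w ∧ w ≠ u).card : ℝ) * t ^ h ≤ d * t ^ h := by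
              gcongr
              omega
          _ = x * t ^ (h + 1) := by rw [← hxt]; ring
      · have hWuv : W u v = c * t ^ (h + 1) := by
          simp only [hW]
          rw [if_pos (by omega), show ℓ - level v = h + 1 by omega]
        have h3 := out v h hh (Finset.univ.filter fun w => G.Adj v w ∧ w ≠ u) (d - 1)
          (fun w hw => (Finset.mem_filter.1 hw).2.1) (by omega)
        refine h3.trans (le_of_eq ?_)
        rw [hWuv, Nat.cast_sub (by omega)]
        calc t ^ h * (d + (d - (1 : ℕ))) = t ^ h * (x * c * t) := by rw [hxct]; push_cast; ring
          _ = _ := by ring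
    · have hWuv : W u v = 1 := by
        have h1 := hlevel u
        have h2 : level v = level u + 1 := (hadj u v huv).resolve_right (by omega)
        simp only [hW]
        rw [if_neg (by omega), hv, Nat.sub_self, pow_zero]
      have h1 := hleaf v hv
      rw [hWuv, mul_one, Finset.sum_congr rfl (fun w hw =>
        leaf_out v hv w (Finset.mem_filter.1 hw).2.1), Finset.sum_const, nsmul_eq_mul]
      have h2 : (Finset.univ.filter fun w => G.Adj v w ∧ w ≠ u).card ≤ 1 := by omega
      have h3 : ((Finset.univ.filter fun w => G.Adj v w ∧ w ≠ u).card : ℝ) ≤ 1 := by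
        exact_mod_cast h2
      nlinarith
  have hstart : ∑ w with G.Adj v₀ w, W v₀ w ≤ 2 * d := by
    rcases (hlevel v₀).lt_or_eq with hv | hv
    · have h1 := out v₀ 0 (by omega) (Finset.univ.filter fun w => G.Adj v₀ w) d
        (fun w hw => (Finset.mem_filter.1 hw).2)
        (by rw [card_filter_adj_eq_ncard]; exact hdeg v₀ hv)
      linarith
    · rw [Finset.sum_congr rfl (fun w hw => leaf_out v₀ hv w (Finset.mem_filter.1 hw).2),
        Finset.sum_const, nsmul_eq_mul, card_filter_adj_eq_ncard]
      have h2 : ((G.neighborSet v₀).ncard : ℝ) ≤ 2 := by exact_mod_cast hleaf v₀ hv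
      nlinarith
  have hS : ∀ u, ∀ v ∈ Finset.univ.filter fun v => level v = ℓ, G.Adj u v → 1 ≤ W u v := by
    intro u v hv huv
    have hv : level v = ℓ := by simpa using hv
    have h1 := hlevel u
    simp only [hW]
    have h2 := hadj u v huv
    rw [if_neg (by omega), hv, Nat.sub_self, pow_zero]
  refine (card_near_le hW₀ hx32 hstep _ hS v₀ hstart g).trans (le_of_eq ?_)
  ring

end Levels

section GluedTrees

open SimpleGraph

/-- Vertices of two disjoint rooted `d`-ary trees, of heights `ℓ` (tag `false`) and `ℓ - 1`
(tag `true`). A vertex is the list of choices leading to it, the latest choice first. -/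
abbrev GluedVertex (d ℓ : ℕ) : Type :=
  {p : Bool × List (Fin d) // p.2.length + p.1.toNat ≤ ℓ}

instance gluedVertexFinite (d ℓ : ℕ) : Finite (GluedVertex d ℓ) :=
  Set.Finite.to_subtype <| (Set.finite_univ.prod (List.finite_length_le (Fin d) ℓ)).subset
    fun _ hp => ⟨trivial, (Nat.le_add_right _ _).trans hp⟩

instance gluedVertexFintype (d ℓ : ℕ) : Fintype (GluedVertex d ℓ) :=
  Fintype.ofFinite _

namespace GluedVertex

variable {d ℓ : ℕ}

/-- The tree containing a vertex. -/
def tag (v : GluedVertex d ℓ) : Bool := v.1.1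

/-- The distance of a vertex to the root of its tree. -/
def depth (v : GluedVertex d ℓ) : ℕ := v.1.2.length

@[simp]
lemma tag_mk (b : Bool) (l : List (Fin d)) (h) : tag (⟨(b, l), h⟩ : GluedVertex d ℓ) = b := rfl

@[simp]
lemma depth_mk (b : Bool) (l : List (Fin d)) (h) :
    depth (⟨(b, l), h⟩ : GluedVertex d ℓ) = l.length := rfl

lemma depth_add_le (v : GluedVertex d ℓ) : v.depth + v.tag.toNat ≤ ℓ := v.2

lemma depth_le (v : GluedVertex d ℓ) : v.depth ≤ ℓ := (Nat.le_add_right _ _).trans v.2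

/-- The disjoint union of the two trees. -/
def forest (d ℓ : ℕ) : SimpleGraph (GluedVertex d ℓ) where
  Adj u v := u.tag = v.tag ∧ ∃ c, v.1.2 = c :: u.1.2 ∨ u.1.2 = c :: v.1.2
  symm := ⟨fun _ _ ⟨h, c, hc⟩ => ⟨h.symm, c, hc.symm⟩⟩
  loopless := ⟨by
    rintro v ⟨-, c, hc | hc⟩ <;> simpa using congrArg List.length hc⟩

lemma depth_of_forest_adj {u v : GluedVertex d ℓ} (h : (forest d ℓ).Adj u v) :
    v.depth = u.depth + 1 ∨ u.depth = v.depth + 1 := by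
  obtain ⟨-, c, hc | hc⟩ := h
  · exact Or.inl (by simp [depth, hc])
  · exact Or.inr (by simp [depth, hc])

lemma eq_of_forest_adj {v u u' : GluedVertex d ℓ} (h : (forest d ℓ).Adj v u)
    (h' : (forest d ℓ).Adj v u') (hu : u.depth < v.depth) (hu' : u'.depth < v.depth) : u = u' := by
  obtain ⟨ht, c, hc | hc⟩ := h
  · simp [depth, hc] at hu
  obtain ⟨ht', c', hc' | hc'⟩ := h'
  · simp [depth, hc'] at hu'
  rw [hc] at hc'
  exact Subtype.ext (Prod.ext (ht.symm.trans ht') (List.cons.inj hc').2)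

lemma sum_forest_adj {M : Type*} [AddCommMonoid M] (φ : Bool → ℕ → M) (v : GluedVertex d ℓ) :
    ∑ w with (forest d ℓ).Adj v w, φ w.tag w.depth =
      (if v.depth = 0 then 0 else φ v.tag (v.depth - 1)) +
        if v.depth + v.tag.toNat < ℓ then d • φ v.tag (v.depth + 1) else 0 := by
  have hsplit : (Finset.univ.filter fun w => (forest d ℓ).Adj v w) =
      (Finset.univ.filter fun w : GluedVertex d ℓ => v.tag = w.tag ∧ ∃ c, v.1.2 = c :: w.1.2) ∪
      Finset.univ.filter fun w : GluedVertex d ℓ => v.tag = w.tag ∧ ∃ c, w.1.2 = c :: v.1.2 := by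
    ext w
    simp only [forest, Finset.mem_filter, Finset.mem_univ, true_and, Finset.mem_union]
    grind
  rw [hsplit, Finset.sum_union]
  · have hv := v.depth_add_le
    congr 1
    · rcases hl : v.1.2 with _ | ⟨c, l⟩
      · simp [depth, hl]
      · have hdepth : v.depth = l.length + 1 := by simp [depth, hl]
        rw [Finset.sum_eq_single_of_mem (⟨(v.tag, l), by dsimp only; omega⟩ : GluedVertex d ℓ)]
        · simp [hdepth]
        · simp
        · intro w hw hne
          simp only [Finset.mem_filter, Finset.mem_univ, true_and, List.cons.injEq] at hw
          obtain ⟨htag, c', -, hl'⟩ := hw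
          exact (hne (Subtype.ext (Prod.ext htag.symm hl'.symm))).elim
    · split_ifs with h
      · have himage : (Finset.univ.filter fun w : GluedVertex d ℓ =>
            v.tag = w.tag ∧ ∃ c, w.1.2 = c :: v.1.2) = Finset.univ.image fun c : Fin d =>
              (⟨(v.tag, c :: v.1.2), by
                have : v.1.2.length = v.depth := rfl
                simp; omega⟩ : GluedVertex d ℓ) := by
          ext ⟨⟨b', l'⟩, hw⟩
          simp only [Finset.mem_filter, Finset.mem_univ, true_and, Finset.mem_image,
            Subtype.mk.injEq, Prod.mk.injEq, tag_mk]
          grind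
        rw [himage, Finset.sum_image]
        · simp [depth]
        · intro c _ c' _ hcc
          simpa using hcc
      · rw [Finset.filter_false_of_mem, Finset.sum_empty]
        rintro w - ⟨htag, c, hc⟩
        have hw := w.depth_add_le
        have hdepth : w.depth = v.depth + 1 := by simp [depth, hc]
        rw [← htag] at hw
        omega
  · rw [Finset.disjoint_left]
    intro w hw hw'
    simp only [Finset.mem_filter, Finset.mem_univ, true_and] at hw hw'
    obtain ⟨-, c, hc⟩ := hw
    obtain ⟨-, c', hc'⟩ := hw'
    have h1 := congrArg List.length hc
    have h2 := congrArg List.length hc'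
    simp at h1 h2
    omega

lemma ncard_forest_neighborSet (v : GluedVertex d ℓ) :
    ((forest d ℓ).neighborSet v).ncard =
      (if v.depth = 0 then 0 else 1) + if v.depth + v.tag.toNat < ℓ then d else 0 := by
  rw [← card_filter_adj_eq_ncard, Finset.card_eq_sum_ones]
  simpa only [smul_eq_mul, mul_one] using sum_forest_adj (M := ℕ) (fun _ _ => 1) v

lemma girthAtLeast_forest (g : ℕ) : GirthAtLeast g (forest d ℓ) := by
  have key : ∀ u v : GluedVertex d ℓ, u.tag = v.tag → (∃ c, v.1.2 = c :: u.1.2) →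
      (forest d ℓ \ edge u v).edist v u = ⊤ := by
    intro u v htag ⟨c, hc⟩
    have h := le_add_edist_of_forall_adj (G := forest d ℓ \ edge u v)
      (φ := fun w => if v.1.2 <:+ w.1.2 ∧ w.tag = v.tag then 0 else ⊤) ?_ v u
    · have h1 : ¬ v.1.2 <:+ u.1.2 := fun h => by
        have := h.length_le
        simp [hc] at this
      simpa [h1] using h
    · intro a b hab
      rw [sdiff_adj, edge_adj] at hab
      obtain ⟨⟨htab, c', hc'⟩, hne⟩ := hab
      by_cases ha : v.1.2 <:+ a.1.2 ∧ a.tag = v.tag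
      · have hb : v.1.2 <:+ b.1.2 := by
          rcases hc' with hc' | hc'
          · rw [hc']
            exact ha.1.trans (List.suffix_cons _ _)
          · have h1 := ha.1
            rw [hc', List.suffix_cons_iff] at h1
            refine h1.resolve_left fun h2 => hne ⟨Or.inr ⟨?_, ?_⟩, ?_⟩
            · exact Subtype.ext (Prod.ext ha.2 (hc'.trans h2.symm))
            · rw [hc] at h2
              exact Subtype.ext (Prod.ext (htab.symm.trans (ha.2.trans htag.symm))
                (List.cons.inj h2).2.symm)
            · rintro rfl
              simpa using congrArg List.length hc'
        rw [if_pos ⟨hb, htab.symm.trans ha.2⟩]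
        exact zero_le
      · rw [if_neg ha]
        simp
  rintro u v ⟨htag, c, hc | hc⟩
  · rw [SimpleGraph.edist_comm, key u v htag ⟨c, hc⟩]
    simp
  · rw [edge_comm, key v u htag.symm ⟨c, hc⟩]
    simp

lemma card_filter_tag_depth {b : Bool} {n : ℕ} (h : n + b.toNat ≤ ℓ) :
    (Finset.univ.filter fun v : GluedVertex d ℓ => v.tag = b ∧ v.depth = n).card = d ^ n := by
  have hcard : Fintype.card (List.Vector (Fin d) n) = d ^ n := by simp
  rw [← hcard, ← Finset.card_univ]
  symm
  refine Finset.card_bij (fun l _ => (⟨(b, l.1), by rw [l.2]; exact h⟩ : GluedVertex d ℓ)) ?_ ?_ ?_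
  · intro l _
    simp
  · intro l _ l' _ hll
    exact Subtype.ext (by simpa using hll)
  · rintro ⟨⟨b', l⟩, hl⟩ hv
    simp only [tag_mk, depth_mk, Finset.mem_filter, Finset.mem_univ, true_and] at hv
    obtain ⟨rfl, rfl⟩ := hv
    exact ⟨⟨l, rfl⟩, Finset.mem_univ _, rfl⟩

lemma card_le (hd : 2 ≤ d) : Fintype.card (GluedVertex d ℓ) ≤ 2 * d ^ (ℓ + 1) := by
  have hmaps : ∀ v ∈ (Finset.univ : Finset (GluedVertex d ℓ)), (v.tag, v.depth) ∈
      (Finset.univ : Finset Bool) ×ˢ Finset.range (ℓ + 1) := by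
    intro v _
    simpa [Nat.lt_succ_iff] using v.depth_le
  have hgeom : ∑ n ∈ Finset.range (ℓ + 1), d ^ n ≤ d ^ (ℓ + 1) :=
    (Nat.geomSum_lt hd fun n hn => by simpa using hn).le
  rw [← Finset.card_univ, Finset.card_eq_sum_card_fiberwise hmaps]
  calc _ ≤ ∑ p ∈ (Finset.univ : Finset Bool) ×ˢ Finset.range (ℓ + 1), d ^ p.2 := by
        refine Finset.sum_le_sum fun p _ => ?_
        by_cases h : p.2 + p.1.toNat ≤ ℓ
        · refine (le_of_eq ?_).trans (card_filter_tag_depth h).le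
          congr 1
          ext v
          simp [Prod.ext_iff]
        · rw [Finset.filter_false_of_mem]
          · simp
          · rintro v - rfl
            exact h v.depth_add_le
    _ ≤ 2 * d ^ (ℓ + 1) := by
        rw [Finset.sum_product]
        simpa using hgeom

end GluedVertex

end GluedTrees

section GluedGraph

open SimpleGraph

lemma sum_adj_eq_add_of_le {U M : Type*} [Fintype U] [AddCommMonoid M] {F G : SimpleGraph U}
    (h : F ≤ G) (f : U → M) (v : U) :
    ∑ w with G.Adj v w, f w = ∑ w with F.Adj v w, f w + ∑ w with G.Adj v w ∧ ¬ F.Adj v w, f w := by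
  rw [← Finset.sum_union]
  · refine Finset.sum_congr ?_ fun _ _ => rfl
    ext w
    have := @h v w
    simp only [Finset.mem_filter, Finset.mem_univ, true_and, Finset.mem_union]
    tauto
  · rw [Finset.disjoint_left]
    intro w hw hw'
    exact (Finset.mem_filter.1 hw').2.2 (Finset.mem_filter.1 hw).2

lemma sum_adj_sup_edge {U M : Type*} [Fintype U] [AddCommMonoid M] {G H : SimpleGraph U} {a b : U}
    (hH : H = G ⊔ edge a b) (hne : a ≠ b) (hab : ¬ G.Adj a b) (f : U → M) (v : U) :
    ∑ w with H.Adj v w, f w =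
      ∑ w with G.Adj v w, f w + if v = a then f b else if v = b then f a else 0 := by
  rw [sum_adj_eq_add_of_le (hH ▸ le_sup_left : G ≤ H)]
  congr 1
  have hadj : ∀ u w, H.Adj u w ↔ G.Adj u w ∨ (edge a b).Adj u w := by simp [hH]
  have hba : ¬ G.Adj b a := fun h => hab h.symm
  split_ifs with h1 h2
  · rw [Finset.sum_eq_single_of_mem b]
    · simp [hadj, edge_adj, h1, hne, hab]
    · intro w hw hwb
      simp [hadj, edge_adj, h1, hne] at hw
      tauto
  · rw [Finset.sum_eq_single_of_mem a]
    · simp [hadj, edge_adj, h2, hne.symm, hba]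
    · intro w hw hwb
      simp [hadj, edge_adj, h2, hne.symm] at hw
      tauto
  · rw [Finset.filter_false_of_mem, Finset.sum_empty]
    intro w _ hw
    simp [hadj, edge_adj] at hw
    tauto

namespace GluedVertex

variable {d ℓ : ℕ}

lemma eq_of_depth_eq_zero {u v : GluedVertex d ℓ} (htag : u.tag = v.tag) (hu : u.depth = 0)
    (hv : v.depth = 0) : u = v :=
  Subtype.ext (Prod.ext htag ((List.eq_nil_of_length_eq_zero hu).trans
    (List.eq_nil_of_length_eq_zero hv).symm))

/-- The two trees can be glued along their leaves, with large girth, such that each leaf of the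
higher tree gets one and each leaf of the other tree gets `d` new neighbours. -/
lemma exists_glued {g : ℕ} (hd : 2 ≤ d) (hℓ : 2 ≤ ℓ) (hg : 3 ≤ g)
    (hbig : 10 * d * √(2 * d - 1) ^ g < (d : ℝ) ^ ℓ) :
    ∃ G : SimpleGraph (GluedVertex d ℓ), forest d ℓ ≤ G ∧ GirthAtLeast g G ∧
      (∀ u v, G.Adj u v → (forest d ℓ).Adj u v ∨
        ((u.tag = false ∧ u.depth = ℓ) ∧ v.tag = true ∧ v.depth + 1 = ℓ) ∨
        ((u.tag = true ∧ u.depth + 1 = ℓ) ∧ v.tag = false ∧ v.depth = ℓ)) ∧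
      (∀ v, v.tag = false → v.depth = ℓ → (G.neighborSet v).ncard = 2) ∧
      (∀ v, v.tag = true → v.depth + 1 = ℓ → (G.neighborSet v).ncard = d + 1) := by
  set A : Finset (GluedVertex d ℓ) := Finset.univ.filter fun v => v.tag = false ∧ v.depth = ℓ
    with hA
  set B : Finset (GluedVertex d ℓ) := Finset.univ.filter fun v => v.tag = true ∧ v.depth = ℓ - 1
    with hB
  have memA : ∀ v, v ∈ A ↔ v.tag = false ∧ v.depth = ℓ := by simp [hA]
  have memB : ∀ v, v ∈ B ↔ v.tag = true ∧ v.depth + 1 = ℓ := by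
    intro v
    simp only [hB, Finset.mem_filter, Finset.mem_univ, true_and]
    have := v.depth_le
    grind
  have cardA : A.card = d ^ ℓ := card_filter_tag_depth (by simp)
  have cardB : B.card = d ^ (ℓ - 1) := card_filter_tag_depth (by simp; omega)
  have hAB : Disjoint A B := by
    rw [Finset.disjoint_left]
    intro v hv hv'
    rw [memA] at hv
    rw [memB] at hv'
    simp [hv.1] at hv'
  set r : GluedVertex d ℓ → ℕ := fun v => if v ∈ A then 1 else d with hr
  have rA : ∀ v ∈ A, r v = 1 := fun v hv => if_pos hv
  have rB : ∀ v ∈ B, r v = d := fun v hv => if_neg fun h => Finset.disjoint_left.1 hAB h hv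
  have hsum : ∑ v ∈ A, r v = ∑ v ∈ B, r v := by
    rw [Finset.sum_congr rfl rA, Finset.sum_congr rfl rB]
    simp only [Finset.sum_const, smul_eq_mul, mul_one, cardA, cardB]
    rw [← pow_succ]
    congr 1
    omega
  have degA : ∀ v ∈ A, ((forest d ℓ).neighborSet v).ncard = 1 := by
    intro v hv
    rw [memA] at hv
    rw [ncard_forest_neighborSet, if_neg (by omega), if_neg (by omega)]
  have degB : ∀ v ∈ B, ((forest d ℓ).neighborSet v).ncard = 1 := by
    intro v hv
    rw [memB] at hv
    rw [ncard_forest_neighborSet, if_neg (by omega), if_neg (by simp [hv.1]; omega)]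
  obtain ⟨G, hFG, hG, hdeg, hgirth⟩ := exists_completion hg hAB hsum (girthAtLeast_forest g) (by
    intro G hFG hG hdeg
    have hnear := fun v₀ (hv₀ : ℓ ≤ v₀.depth + 1) => card_last_level_near_le (G := G) hd
      (level := depth) depth_le ?_ ?_ ?_ ?_ v₀ hv₀ g
    · intro a ha b hb
      by_contra! hcon
      have hsub : A ⊆ (((Finset.univ.filter fun v => v.depth = ℓ).filter
          fun v => G.edist a v < g) ∪ ((Finset.univ.filter fun v => v.depth = ℓ).filter
          fun v => G.edist b v < g)) := by
        intro z hz
        have h1 := hcon z hz (by rw [rA z hz]; exact one_pos)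
        rw [SimpleGraph.edist_comm (v := a), SimpleGraph.edist_comm (v := b)] at h1
        have h2 := (memA z).1 hz
        simp only [Finset.mem_union, Finset.mem_filter, Finset.mem_univ, true_and, h2.2]
        by_contra! h3
        exact (h1 h3.1).not_ge h3.2
      have h1 : (A.card : ℝ) ≤ _ := Nat.cast_le.2
        ((Finset.card_le_card hsub).trans (Finset.card_union_le _ _))
      have h2 := hnear a (by rw [((memA a).1 ha).2]; omega)
      have h3 := hnear b (((memB b).1 hb).2.ge)
      rw [cardA] at h1
      push_cast at h1
      have hd' : (2 : ℝ) ≤ d := by exact_mod_cast hd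
      have h4 : 1 ≤ √(2 * d - 1 : ℝ) ^ g :=
        one_le_pow₀ (Real.one_le_sqrt.2 (by linarith))
      nlinarith
    · intro u v huv
      rcases hG u v huv with h | ⟨hu, hv⟩ | ⟨hu, hv⟩
      · exact depth_of_forest_adj h
      · rw [memA] at hu
        rw [memB] at hv
        omega
      · rw [memB] at hu
        rw [memA] at hv
        omega
    · intro v hv
      by_cases hvB : v ∈ B
      · have := hdeg v (Or.inr hvB)
        rw [degB v hvB, rB v hvB] at this
        omega
      · have hvA : v ∉ A := fun h => by
          rw [memA] at h
          omega
        have heq : G.neighborSet v = (forest d ℓ).neighborSet v := by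
          ext w
          refine ⟨fun h => ?_, fun h => hFG h⟩
          rcases hG v w h with h | h | h
          · exact h
          · exact absurd h.1 hvA
          · exact absurd h.1 hvB
        rw [heq, ncard_forest_neighborSet]
        split_ifs <;> omega
    · intro v hv
      have hvA : v ∈ A := by
        rw [memA]
        have := v.depth_add_le
        rcases h : v.tag
        · exact ⟨rfl, hv⟩
        · rw [h] at this
          simp at this
          omega
      have := hdeg v (Or.inl hvA)
      rw [degA v hvA, rA v hvA] at this
      omega
    · intro v u u' hv hu hu' huv hu'v
      have key : ∀ w, G.Adj v w → w.depth < v.depth → (forest d ℓ).Adj v w := by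
        intro w hw hwv
        rcases hG v w hw with h | h | h
        · exact h
        · have := (memA v).1 h.1
          omega
        · have := (memA w).1 h.2
          omega
      exact eq_of_forest_adj (key u hu huv) (key u' hu' hu'v) huv hu'v)
  refine ⟨G, hFG, hgirth, fun u v huv => ?_, fun v h1 h2 => ?_, fun v h1 h2 => ?_⟩
  · have := hG u v huv
    rwa [memA, memB, memA, memB] at this
  · have hvA := (memA v).2 ⟨h1, h2⟩
    rw [hdeg v (Or.inl hvA), degA v hvA, rA v hvA]
  · have hvB := (memB v).2 ⟨h1, h2⟩
    rw [hdeg v (Or.inr hvB), degB v hvB, rB v hvB, add_comm]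

/-- The gluing of the two trees with an additional edge between the roots: all degrees are `d + 1`
except at leaves of the higher tree, and functions on `ℕ` satisfying the right recursion give
eigenvectors that vanish on those leaves. -/
theorem exists_glued_graph {g : ℕ} (hd : 2 ≤ d) (hℓ : 2 ≤ ℓ) (hg : 3 ≤ g) (hgℓ : g ≤ 2 * ℓ + 1)
    (hbig : 10 * d * √(2 * d - 1) ^ g < (d : ℝ) ^ ℓ) :
    ∃ H : SimpleGraph (GluedVertex d ℓ), GirthAtLeast g H ∧
      (∀ v, (H.neighborSet v).ncard ≤ d + 1) ∧
      (∀ v, v.depth < ℓ → (H.neighborSet v).ncard = d + 1) ∧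
      ∀ (f : ℕ → ℝ) (μ : ℝ), f 0 = 0 → (∀ h, f (h + 2) + d * f h = μ * f (h + 1)) →
        f (ℓ + 1) = - f ℓ → ∀ v, ∑ w with H.Adj v w, (if w.tag then -1 else 1) * f (ℓ - w.depth) =
          μ * ((if v.tag then -1 else 1) * f (ℓ - v.depth)) := by
  obtain ⟨G, hFG, hgirth, hG, degA, degB⟩ := exists_glued hd hℓ hg hbig
  obtain ⟨a, ta, da⟩ : ∃ a : GluedVertex d ℓ, a.tag = false ∧ a.depth = 0 :=
    ⟨⟨(false, []), by simp⟩, rfl, rfl⟩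
  obtain ⟨b, tb, db⟩ : ∃ b : GluedVertex d ℓ, b.tag = true ∧ b.depth = 0 :=
    ⟨⟨(true, []), by simp; omega⟩, rfl, rfl⟩
  have hane : a ≠ b := fun h => by simp [h, tb] at ta
  have hab : ¬ G.Adj a b := by
    intro h
    rcases hG a b h with h | h | h
    · simpa [ta, tb] using h.1
    · omega
    · simpa [ta] using h.1.1
  have eq_a : ∀ v : GluedVertex d ℓ, v = a ↔ v.tag = false ∧ v.depth = 0 := fun v =>
    ⟨fun h => by simp [h, ta, da], fun h => eq_of_depth_eq_zero (h.1.trans ta.symm) h.2 da⟩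
  have eq_b : ∀ v : GluedVertex d ℓ, v = b ↔ v.tag = true ∧ v.depth = 0 := fun v =>
    ⟨fun h => by simp [h, tb, db], fun h => eq_of_depth_eq_zero (h.1.trans tb.symm) h.2 db⟩
  have hdist : (g : ℕ∞) ≤ G.edist a b + 1 := by
    have h := le_add_edist_of_forall_adj (G := G)
      (φ := fun w => ((if w.tag then 2 * ℓ - w.depth else w.depth : ℕ) : ℕ∞)) ?_ a b
    · simp only [ta, tb, da, db, if_true, Bool.false_eq_true, if_false, Nat.cast_zero, zero_add, Nat.sub_zero] at h
      calc (g : ℕ∞) ≤ ((2 * ℓ : ℕ) : ℕ∞) + 1 := by exact_mod_cast hgℓ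
        _ ≤ _ := add_le_add_left h 1
    · intro u v huv
      have hu := u.depth_add_le
      have hv := v.depth_add_le
      suffices (if v.tag then 2 * ℓ - v.depth else v.depth) ≤
        (if u.tag then 2 * ℓ - u.depth else u.depth) + 1 by exact_mod_cast this
      rcases hG u v huv with h | h | h
      · have h1 := depth_of_forest_adj h
        rw [h.1]
        split_ifs <;> omega
      · rw [h.1.1, h.2.1]
        simp
        omega
      · rw [h.1.1, h.2.1]
        simp
        omega
  obtain ⟨H, hH⟩ : ∃ H, H = G ⊔ edge a b := ⟨_, rfl⟩
  have sum_eq : ∀ {M : Type} [AddCommMonoid M] (φ : Bool → ℕ → M) (v : GluedVertex d ℓ),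
      ∑ w with H.Adj v w, φ w.tag w.depth =
        ((if v.depth = 0 then φ (!v.tag) 0 else φ v.tag (v.depth - 1)) +
        if v.depth + v.tag.toNat < ℓ then d • φ v.tag (v.depth + 1) else
          (if v.tag then d else 1) • φ (!v.tag) (if v.tag then ℓ else ℓ - 1)) := by
    intro M _ φ v
    have hextra : ∑ w with G.Adj v w ∧ ¬ (forest d ℓ).Adj v w, φ w.tag w.depth =
        if v.depth + v.tag.toNat < ℓ then 0 else
          (if v.tag then d else 1) • φ (!v.tag) (if v.tag then ℓ else ℓ - 1) := by
      have hv := v.depth_add_le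
      split_ifs with h1 h2
      · rw [Finset.filter_false_of_mem, Finset.sum_empty]
        intro w _ hw
        rcases hG v w hw.1 with h | h | h
        · exact hw.2 h
        · omega
        · rw [h.1.1] at h1
          simp at h1
          omega
      all_goals
        have hcard := sum_adj_eq_add_of_le hFG (fun _ => 1) v
        simp only [← Finset.card_eq_sum_ones, card_filter_adj_eq_ncard] at hcard
        rw [ncard_forest_neighborSet, if_neg h1] at hcard
      · have hvℓ : v.depth + 1 = ℓ := by simp [h2] at h1 hv; omega
        rw [degB v h2 hvℓ, if_neg (by omega)] at hcard
        have hconst : ∀ w ∈ Finset.univ.filter fun w => G.Adj v w ∧ ¬ (forest d ℓ).Adj v w,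
            φ w.tag w.depth = φ (!v.tag) ℓ := by
          intro w hw
          simp only [Finset.mem_filter, Finset.mem_univ, true_and] at hw
          rcases hG v w hw.1 with h | h | h
          · exact absurd h hw.2
          · simp [h2] at h
          · rw [h.2.1, h.2.2, h2, Bool.not_true]
        rw [Finset.sum_congr rfl hconst, Finset.sum_const]
        congr 1
        omega
      · have h2 : v.tag = false := by simpa using h2
        have hvℓ : v.depth = ℓ := by simp [h2] at h1 hv; omega
        rw [degA v h2 hvℓ, if_neg (by omega)] at hcard
        have hconst : ∀ w ∈ Finset.univ.filter fun w => G.Adj v w ∧ ¬ (forest d ℓ).Adj v w,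
            φ w.tag w.depth = φ (!v.tag) (ℓ - 1) := by
          intro w hw
          simp only [Finset.mem_filter, Finset.mem_univ, true_and] at hw
          rcases hG v w hw.1 with h | h | h
          · exact absurd h hw.2
          · rw [h.2.1, h2, Bool.not_false, show w.depth = ℓ - 1 by omega]
          · simp [h2] at h
        rw [Finset.sum_congr rfl hconst, Finset.sum_const]
        congr 1
        omega
    rw [sum_adj_sup_edge hH hane hab, sum_adj_eq_add_of_le hFG, hextra, sum_forest_adj]
    have hv := v.depth_add_le
    simp only [eq_a, eq_b, ta, tb, da, db]
    by_cases h0 : v.depth = 0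
    · rcases htag : v.tag <;>
        simp [h0, show 0 < ℓ by omega, show 1 < ℓ by omega, add_comm]
    · simp only [h0, and_false, if_false, add_zero]
      split_ifs <;> simp
  refine ⟨H, hH ▸ hgirth.sup_edge hdist, ?_, ?_, ?_⟩
  · intro v
    rw [← card_filter_adj_eq_ncard, Finset.card_eq_sum_ones, sum_eq (fun _ _ => 1) v]
    simp only [smul_eq_mul, mul_one]
    split_ifs <;> omega
  · intro v hv
    rw [← card_filter_adj_eq_ncard, Finset.card_eq_sum_ones, sum_eq (fun _ _ => 1) v]
    simp only [smul_eq_mul, mul_one]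
    rcases htag : v.tag <;> simp [hv, add_comm]
  · intro f μ f0 frec ftop v
    rw [sum_eq (fun t n => (if t then -1 else 1) * f (ℓ - n)) v]
    have hv := v.depth_add_le
    by_cases h0 : v.depth = 0
    · have h1 : v.depth + v.tag.toNat < ℓ := by
        have := v.tag.toNat_le
        omega
      obtain ⟨n, rfl⟩ : ∃ n, ℓ = n + 1 := ⟨ℓ - 1, by omega⟩
      have := frec n
      rw [if_pos h0, if_pos h1, h0, nsmul_eq_mul]
      rcases htag : v.tag <;> simp <;> linarith
    · rw [if_neg h0]
      obtain ⟨h, hh⟩ : ∃ h, v.depth + h = ℓ := ⟨ℓ - v.depth, by omega⟩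
      rcases h with _ | h
      · have htag : v.tag = false := by
          rcases htag : v.tag
          · rfl
          · simp [htag] at hv
            omega
        simp [htag, show v.depth = ℓ by omega, f0]
      · have e1 : ℓ - v.depth = h + 1 := by omega
        have e2 : ℓ - (v.depth - 1) = h + 2 := by omega
        have e3 : ℓ - (v.depth + 1) = h := by omega
        have := frec h
        rw [e1, e2, e3]
        rcases htag : v.tag
        · rw [if_pos (show v.depth + false.toNat < ℓ by simp; omega)]
          simp
          linarith
        · by_cases h1 : v.depth + true.toNat < ℓ
          · rw [if_pos h1]
            simp
            linarith
          · obtain rfl : h = 0 := by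
              rw [Bool.toNat_true] at h1
              omega
            rw [if_neg h1]
            simp [f0] at this ⊢
            linarith

end GluedVertex

end GluedGraph

section RegularExtension

open SimpleGraph

variable {U Q : Type*} [Fintype U] [Fintype Q]

/-- Two disjoint copies of a graph, each placed in a copy of a larger vertex set. -/
def doubled (H : SimpleGraph U) (e : U ↪ Q) : SimpleGraph (Q × Bool) where
  Adj p q := p.2 = q.2 ∧ ∃ u v, e u = p.1 ∧ e v = q.1 ∧ H.Adj u v
  symm := ⟨fun _ _ ⟨h, u, v, hu, hv, huv⟩ => ⟨h.symm, v, u, hv, hu, huv.symm⟩⟩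
  loopless := ⟨fun _ ⟨_, _, _, hu, hv, huv⟩ => huv.ne (e.injective (hu.trans hv.symm))⟩

lemma doubled_adj_iff {H : SimpleGraph U} {e : U ↪ Q} {u : U} {b : Bool} {q : Q × Bool} :
    (doubled H e).Adj (e u, b) q ↔ ∃ v, (e v, b) = q ∧ H.Adj u v := by
  constructor
  · rintro ⟨h, u', v, hu, hv, huv⟩
    rw [e.injective hu] at huv
    exact ⟨v, Prod.ext hv h, huv⟩
  · rintro ⟨v, rfl, huv⟩
    exact ⟨rfl, u, v, rfl, rfl, huv⟩

lemma ncard_neighborSet_doubled (H : SimpleGraph U) (e : U ↪ Q) (u : U) (b : Bool) :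
    ((doubled H e).neighborSet (e u, b)).ncard = (H.neighborSet u).ncard := by
  have h : (doubled H e).neighborSet (e u, b) = (fun v => (e v, b)) '' H.neighborSet u := by
    ext q
    simp only [mem_neighborSet, doubled_adj_iff, Set.mem_image]
    grind
  rw [h, Set.ncard_image_of_injective _ fun v w hvw => e.injective (Prod.ext_iff.1 hvw).1]

lemma ncard_neighborSet_doubled_eq_zero (H : SimpleGraph U) (e : U ↪ Q) {q : Q}
    (hq : q ∉ Set.range e) (b : Bool) : ((doubled H e).neighborSet (q, b)).ncard = 0 := by
  have h : (doubled H e).neighborSet (q, b) = ∅ := by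
    ext p
    simp only [mem_neighborSet, Set.mem_empty_iff_false, iff_false]
    rintro ⟨-, u, v, hu, -⟩
    exact hq ⟨u, hu⟩
  rw [h, Set.ncard_empty]

lemma GirthAtLeast.doubled {g : ℕ} {H : SimpleGraph U} (hH : GirthAtLeast g H) (e : U ↪ Q) :
    GirthAtLeast g (doubled H e) := by
  rintro ⟨p, b⟩ ⟨q, b'⟩ ⟨hb, u, v, hu, hv, huv⟩
  obtain rfl : b = b' := hb
  obtain rfl : e u = p := hu
  obtain rfl : e v = q := hv
  have hinj : Function.Injective fun t => (e t, b) := fun s t h => e.injective (Prod.ext_iff.1 h).1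
  refine (hH u v huv).trans (add_le_add_left ?_ 1)
  have key := le_add_edist_of_forall_adj (G := Formal.doubled H e \ edge (e u, b) (e v, b))
    (φ := Function.extend (fun t => (e t, b)) ((H \ edge u v).edist u) fun _ => ⊤) ?_
    (e u, b) (e v, b)
  · rwa [hinj.extend_apply ((H \ edge u v).edist u) _ u,
      hinj.extend_apply ((H \ edge u v).edist u) _ v, SimpleGraph.edist_self, zero_add] at key
  · intro x y hxy
    by_cases hx : ∃ s, (e s, b) = x
    · obtain ⟨s, rfl⟩ := hx
      rw [sdiff_adj, doubled_adj_iff] at hxy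
      obtain ⟨⟨t, rfl, hst⟩, hne⟩ := hxy
      rw [hinj.extend_apply ((H \ edge u v).edist u) _ s,
        hinj.extend_apply ((H \ edge u v).edist u) _ t]
      refine edist_le_edist_add_one u ?_
      rw [sdiff_adj]
      refine ⟨hst, fun h => hne ?_⟩
      rw [edge_adj] at h ⊢
      simpa using h
    · rw [Function.extend_apply' _ _ _ hx]
      simp

/-- A graph with large girth and degrees at most `d + 1` embeds into a `(d + 1)`-regular graph with
large girth, such that eigenvectors vanishing at the vertices of smaller degree extend by zero. -/
theorem exists_regular_extension {H : SimpleGraph U} {d g : ℕ} (hd : 2 ≤ d) (hg : 3 ≤ g)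
    (hH : GirthAtLeast g H) (hdeg : ∀ v, (H.neighborSet v).ncard ≤ d + 1) (e : U ↪ Q)
    (hcard : Fintype.card U + (2 + 4 * (d + 1) * d ^ g) < Fintype.card Q) :
    ∃ G : SimpleGraph (Q × Bool), IsRegular G (d + 1) ∧ GirthAtLeast g G ∧
      ∀ (x : U → ℝ) (μ : ℝ), (∀ v, (H.neighborSet v).ncard < d + 1 → x v = 0) →
        (∀ v, ∑ w with H.Adj v w, x w = μ * x v) →
        ∀ q, ∑ q' with G.Adj q q', Function.extend (fun u => (e u, false)) x 0 q' =
          μ * Function.extend (fun u => (e u, false)) x 0 q := by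
  set F := doubled H e with hF
  set A : Finset (Q × Bool) := Finset.univ ×ˢ {false} with hA
  set B : Finset (Q × Bool) := Finset.univ ×ˢ {true} with hB
  have memA : ∀ q, q ∈ A ↔ q.2 = false := by simp [hA]
  have memB : ∀ q, q ∈ B ↔ q.2 = true := by simp [hB]
  have memAB : ∀ q, q ∈ A ∨ q ∈ B := by
    intro q
    rw [memA, memB]
    exact (Bool.eq_false_or_eq_true q.2).symm
  have hAB : Disjoint A B := by
    rw [Finset.disjoint_left]
    intro q hq hq'
    rw [memA] at hq
    rw [memB, hq] at hq'
    simp at hq'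
  have Fdeg : ∀ q b, (F.neighborSet (q, b)).ncard ≤ d + 1 := by
    intro q b
    by_cases hq : q ∈ Set.range e
    · obtain ⟨u, rfl⟩ := hq
      rw [hF, ncard_neighborSet_doubled]
      exact hdeg u
    · rw [hF, ncard_neighborSet_doubled_eq_zero H e hq]
      omega
  have Fsymm : ∀ q, (F.neighborSet (q, false)).ncard = (F.neighborSet (q, true)).ncard := by
    intro q
    by_cases hq : q ∈ Set.range e
    · obtain ⟨u, rfl⟩ := hq
      rw [hF, ncard_neighborSet_doubled, ncard_neighborSet_doubled]
    · rw [hF, ncard_neighborSet_doubled_eq_zero H e hq, ncard_neighborSet_doubled_eq_zero H e hq]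
  set r : Q × Bool → ℕ := fun q => d + 1 - (F.neighborSet q).ncard with hr
  have hdr : ∀ q, (F.neighborSet q).ncard + r q = d + 1 := by
    rintro ⟨q, b⟩
    have := Fdeg q b
    simp only [hr]
    omega
  have hsum : ∑ q ∈ A, r q = ∑ q ∈ B, r q := by
    simp [hA, hB, hr, Fsymm]
  obtain ⟨G, hFG, hG, hGdeg, hgirth⟩ := exists_completion hg hAB hsum (hH.doubled e) (by
    intro G hFG hG hGdeg
    have hGdeg' : ∀ q, (G.neighborSet q).ncard ≤ d + 1 := fun q =>
      (hGdeg q (memAB q)).trans (hdr q).le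
    set S : Finset (Q × Bool) := ((Finset.univ.map e)ᶜ) ×ˢ {false} with hS
    have memS : ∀ q, q ∈ S ↔ q.1 ∉ Set.range e ∧ q.2 = false := by simp [hS]
    have cardS : S.card + Fintype.card U = Fintype.card Q := by
      rw [hS, Finset.card_product, Finset.card_singleton, mul_one, Finset.card_compl,
        Finset.card_map, Finset.card_univ]
      exact Nat.sub_add_cancel (Fintype.card_le_of_embedding e)
    have hd' : (2 : ℝ) ≤ d := by exact_mod_cast hd
    have hnear := fun v₀ => card_near_le (G := G) (W := fun _ _ => 1) (x := d) (K := d + 1)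
      (by simp) (by linarith) ?_ S (by simp) v₀ ?_ g
    · intro a ha b hb
      by_contra! hcon
      have hsub : S ⊆ (S.filter fun v => G.edist a v < g) ∪ S.filter fun v => G.edist b v < g := by
        intro z hz
        have hz' := (memS z).1 hz
        have h1 := hcon z ((memA z).2 hz'.2) (by
          have h2 := hdr z
          have h3 := ncard_neighborSet_doubled_eq_zero H e hz'.1 z.2
          rw [← hF, Prod.mk.eta] at h3
          omega)
        rw [SimpleGraph.edist_comm (v := a), SimpleGraph.edist_comm (v := b)] at h1
        simp only [Finset.mem_union, Finset.mem_filter, hz, true_and]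
        by_contra! h3
        exact (h1 h3.1).not_ge h3.2
      have h1 : (S.card : ℝ) ≤ _ := Nat.cast_le.2
        ((Finset.card_le_card hsub).trans (Finset.card_union_le _ _))
      have h2 := hnear a
      have h3 := hnear b
      have h4 : 2 + 4 * (d + 1) * d ^ g < S.card := by omega
      have h5 : (2 + 4 * (d + 1) * d ^ g : ℝ) < S.card := by exact_mod_cast h4
      push_cast at h1
      linarith
    · intro u v huv
      have hfilter : (Finset.univ.filter fun w => G.Adj v w ∧ w ≠ u) =
          (Finset.univ.filter fun w => G.Adj v w).erase u := by
        ext w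
        simp [and_comm]
      have hc : (Finset.univ.filter fun w => G.Adj v w ∧ w ≠ u).card + 1 =
          (G.neighborSet v).ncard := by
        rw [hfilter, Finset.card_erase_add_one (by simpa using huv.symm), card_filter_adj_eq_ncard]
      have h1 := hGdeg' v
      have h2 : (Finset.univ.filter fun w => G.Adj v w ∧ w ≠ u).card ≤ d := by omega
      rw [Finset.sum_const, nsmul_eq_mul, mul_one, mul_one]
      exact_mod_cast h2
    · rw [Finset.sum_const, nsmul_eq_mul, mul_one, card_filter_adj_eq_ncard]
      exact_mod_cast hGdeg' v₀)
  refine ⟨G, fun q => (hGdeg q (memAB q)).trans (hdr q), hgirth, ?_⟩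
  intro x μ hx hμ q
  have hinj : Function.Injective fun u => (e u, false) :=
    fun s t h => e.injective (Prod.ext_iff.1 h).1
  set y := Function.extend (fun u => (e u, false)) x 0 with hy
  have hyu : ∀ u, y (e u, false) = x u := fun u => hinj.extend_apply x 0 u
  by_cases hq : ∃ u, (e u, false) = q
  · obtain ⟨u, rfl⟩ := hq
    have hextra : ∑ w with G.Adj (e u, false) w ∧ ¬ F.Adj (e u, false) w, y w = 0 := by
      refine Finset.sum_eq_zero fun w hw => ?_
      simp only [Finset.mem_filter, Finset.mem_univ, true_and] at hw
      have hwB : w.2 = true := by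
        rcases hG _ w hw.1 with h | h | h
        · exact absurd h hw.2
        · exact (memB w).1 h.2
        · simpa using (memB _).1 h.1
      refine Function.extend_apply' _ _ _ ?_
      rintro ⟨t, rfl⟩
      simp at hwB
    have himage : (Finset.univ.filter fun w => F.Adj (e u, false) w) =
        (Finset.univ.filter fun v => H.Adj u v).image fun v => (e v, false) := by
      ext w
      simp only [hF, doubled_adj_iff, Finset.mem_filter, Finset.mem_univ, true_and,
        Finset.mem_image]
      grind
    rw [sum_adj_eq_add_of_le hFG, hextra, add_zero, himage, Finset.sum_image hinj.injOn]
    simp only [hyu, hμ]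
  · rw [hy, Function.extend_apply' _ _ _ hq, Pi.zero_apply, mul_zero, ← hy]
    refine Finset.sum_eq_zero fun w hw => ?_
    simp only [Finset.mem_filter, Finset.mem_univ, true_and] at hw
    by_cases hw' : ∃ t, (e t, false) = w
    · obtain ⟨t, rfl⟩ := hw'
      rw [hyu]
      by_contra ht
      have h1 : (H.neighborSet t).ncard = d + 1 :=
        le_antisymm (hdeg t) (not_lt.1 fun h => ht (hx t h))
      have h2 : F.neighborSet (e t, false) = G.neighborSet (e t, false) := by
        refine Set.eq_of_subset_of_ncard_le (fun w hw => hFG hw) ?_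
        rw [hGdeg _ (memAB _), hdr, hF, ncard_neighborSet_doubled, h1]
      have h3 : F.Adj (e t, false) q := by
        rw [← mem_neighborSet, h2]
        exact hw.symm
      rw [hF, doubled_adj_iff] at h3
      obtain ⟨v, hv, -⟩ := h3
      exact hq ⟨v, hv⟩
    · exact Function.extend_apply' _ _ _ hw'

end RegularExtension

section Recursion

open Real

/-- A continuous function which is positive at even and negative at odd terms of an increasing
sequence has a zero between any two consecutive terms. -/
lemma exists_zero_of_alternating {ψ : ℝ → ℝ} (hψ : Continuous ψ) {a b : ℝ} (hab : a ≤ b) {k : ℕ}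
    (ha : 0 < (-1) ^ k * ψ a) (hb : 0 < (-1) ^ (k + 1) * ψ b) : ∃ x ∈ Set.Ioo a b, ψ x = 0 := by
  have h := intermediate_value_Ioo' hab (f := fun x => (-1) ^ k * ψ x) (by fun_prop)
  obtain ⟨x, hx, hx0⟩ := h (show (0 : ℝ) ∈ _ from ⟨by rw [pow_succ] at hb; linarith, ha⟩)
  exact ⟨x, hx, by simpa using hx0⟩

lemma sin_two_mul_add_one_mul_pi_div_two (k : ℕ) : sin ((2 * k + 1) * π / 2) = (-1) ^ k := by
  rw [show (2 * k + 1) * π / 2 = π / 2 + k * π by ring, sin_add_nat_mul_pi, sin_pi_div_two, mul_one]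

lemma exists_strictMono_zeros {c : ℝ} (hc : 1 < c) (ℓ : ℕ) :
    ∃ θ : Fin ℓ → ℝ, StrictMono θ ∧
      ∀ k, θ k ∈ Set.Ioo 0 π ∧ c * sin ((ℓ + 1) * θ k) + sin (ℓ * θ k) = 0 := by
  set t : ℕ → ℝ := fun k => (2 * k + 1) * π / 2 / (ℓ + 1) with ht
  have hℓ : (0 : ℝ) < ℓ + 1 := by positivity
  have tmono : StrictMono t := by
    intro i j hij
    have hij' : (i : ℝ) < j := by exact_mod_cast hij
    simp only [ht]
    gcongr
  have tpos : ∀ k, 0 < t k := fun k => by positivity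
  have tlt : t ℓ < π := by
    simp only [ht]
    rw [div_lt_iff₀ hℓ]
    nlinarith [pi_pos]
  have hsign : ∀ k, 0 < (-1) ^ k * (c * sin ((ℓ + 1) * t k) + sin (ℓ * t k)) := by
    intro k
    have h1 : (ℓ + 1) * t k = (2 * k + 1) * π / 2 := by
      simp only [ht]
      field_simp
    rw [h1, sin_two_mul_add_one_mul_pi_div_two]
    have h2 := abs_le.1 (abs_sin_le_one (ℓ * t k))
    rcases neg_one_pow_eq_or ℝ k with h | h <;> rw [h] <;> linarith
  have hzero : ∀ k : Fin ℓ, ∃ x ∈ Set.Ioo (t k) (t (k + 1)),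
      c * sin ((ℓ + 1) * x) + sin (ℓ * x) = 0 := fun k =>
    exists_zero_of_alternating (by fun_prop) (tmono k.1.lt_succ_self).le (hsign k) (hsign (k + 1))
  choose θ hθ hθ0 using hzero
  refine ⟨θ, fun i j hij => ?_, fun k => ⟨⟨(tpos k).trans (hθ k).1, ?_⟩, hθ0 k⟩⟩
  · have hij' : (i : ℕ) + 1 ≤ j := hij
    exact (hθ i).2.trans_le ((tmono.monotone hij').trans (hθ j).1.le)
  · exact (hθ k).2.trans_le ((tmono.monotone k.2).trans tlt.le)

lemma exists_recursion_solutions {d : ℕ} (hd : 2 ≤ d) (ℓ : ℕ) :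
    ∃ Λ : Finset ℝ, Λ.card = ℓ ∧ ∀ μ ∈ Λ, ∃ f : ℕ → ℝ, f 0 = 0 ∧ f 1 ≠ 0 ∧
      (∀ h, f (h + 2) + d * f h = μ * f (h + 1)) ∧ f (ℓ + 1) = - f ℓ := by
  have hd' : (2 : ℝ) ≤ d := by exact_mod_cast hd
  have hs : 1 < √(d : ℝ) := Real.lt_sqrt_of_sq_lt (by linarith)
  have hsq : √(d : ℝ) ^ 2 = d := Real.sq_sqrt (by linarith)
  obtain ⟨θ, hmono, hθ⟩ := exists_strictMono_zeros hs ℓ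
  have hinj : Function.Injective fun k => 2 * √(d : ℝ) * cos (θ k) := by
    intro i j hij
    have h1 : cos (θ i) = cos (θ j) := mul_left_cancel₀ (by positivity) hij
    exact hmono.injective (injOn_cos ⟨(hθ i).1.1.le, (hθ i).1.2.le⟩
      ⟨(hθ j).1.1.le, (hθ j).1.2.le⟩ h1)
  refine ⟨Finset.univ.image fun k => 2 * √(d : ℝ) * cos (θ k), ?_, ?_⟩
  · rw [Finset.card_image_of_injective _ hinj, Finset.card_univ, Fintype.card_fin]
  · intro μ hμ
    obtain ⟨k, -, rfl⟩ := Finset.mem_image.1 hμ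
    refine ⟨fun h => √(d : ℝ) ^ h * sin (h * θ k), by simp, ?_, ?_, ?_⟩
    · have := sin_pos_of_mem_Ioo (hθ k).1
      simp only [pow_one, Nat.cast_one, one_mul]
      positivity
    · intro h
      have h1 : sin ((h + 2 : ℕ) * θ k) + sin (h * θ k) =
          2 * cos (θ k) * sin ((h + 1 : ℕ) * θ k) := by
        rw [show ((h + 2 : ℕ) : ℝ) * θ k = (h + 1 : ℕ) * θ k + θ k by push_cast; ring,
          show (h : ℝ) * θ k = (h + 1 : ℕ) * θ k - θ k by push_cast; ring, sin_add, sin_sub]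
        ring
      calc _ = √(d : ℝ) ^ (h + 2) * (sin ((h + 2 : ℕ) * θ k) + sin (h * θ k)) := by
            rw [← hsq]
            simp only [Real.sqrt_sq (sqrt_nonneg _)]
            ring
        _ = _ := by rw [h1]; ring
    · have h1 := (hθ k).2
      push_cast
      linear_combination √(d : ℝ) ^ ℓ * h1

end Recursion

section Assembly

open SimpleGraph

lemma hasLocalizedEigenvector_of_sum_adj {G : SimpleGraph V} {y : V → ℝ} {μ ε : ℝ} {S : Finset V}
    (hε : ε ≤ 1) (hy : y ≠ 0) (hS : ∀ q ∉ S, y q = 0)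
    (hμ : ∀ q, ∑ q' with G.Adj q q', y q' = μ * y q) :
    HasLocalizedEigenvector G μ S.card ε := by
  have hpos : 0 < ∑ x, y x ^ 2 := by
    obtain ⟨q, hq⟩ := Function.ne_iff.1 hy
    exact Finset.sum_pos' (fun _ _ => sq_nonneg _) ⟨q, Finset.mem_univ q, sq_pos_of_ne_zero hq⟩
  have hsq : ∑ x, ((√(∑ x, y x ^ 2))⁻¹ * y x) ^ 2 = 1 := by
    simp_rw [mul_pow, inv_pow, Real.sq_sqrt hpos.le, ← Finset.mul_sum]
    exact inv_mul_cancel₀ hpos.ne'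
  refine ⟨fun x => (√(∑ x, y x ^ 2))⁻¹ * y x, ?_, hsq, S, rfl, ?_⟩
  · funext q
    have h : (adjMat G).mulVec y q = μ * y q := by
      rw [← hμ q, adjMat, adjMatrix_mulVec_apply]
      refine Finset.sum_congr ?_ fun _ _ => rfl
      ext
      simp
    have h2 := congrFun (Matrix.mulVec_smul (adjMat G) (√(∑ x, y x ^ 2))⁻¹ y) q
    rw [Pi.smul_apply, h] at h2
    refine h2.trans ?_
    simp only [smul_eq_mul, Pi.smul_apply]
    ring
  · rw [Finset.sum_subset (Finset.subset_univ S) fun x _ hx => by simp [hS x hx], hsq]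
    exact hε

lemma exists_graph_of_parameters {d ℓ g n : ℕ} {ε : ℝ} (hε : ε ≤ 1) (hd : 2 ≤ d) (hℓ : 2 ≤ ℓ)
    (hg : 3 ≤ g) (hgℓ : g ≤ 2 * ℓ + 1) (hbig : 10 * d * √(2 * d - 1) ^ g < (d : ℝ) ^ ℓ)
    (hcard : 2 * d ^ (ℓ + 1) + (2 + 4 * (d + 1) * d ^ g) < n) :
    ∃ G : SimpleGraph (Fin (n * 2)), IsRegular G (d + 1) ∧ (∀ x : ℝ, x ≤ g → girthGe G x) ∧
      ∀ r ≤ ℓ, LocalizedSpectrum G r ε (2 * d ^ (ℓ + 1)) := by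
  obtain ⟨H, hHg, hHdeg, hHdeep, hHeig⟩ := GluedVertex.exists_glued_graph hd hℓ hg hgℓ hbig
  have hUcard := GluedVertex.card_le (ℓ := ℓ) hd
  obtain ⟨e⟩ : Nonempty (GluedVertex d ℓ ↪ Fin n) :=
    Function.Embedding.nonempty_of_card_le (by rw [Fintype.card_fin]; omega)
  obtain ⟨G, hreg, hgirth, hG⟩ := exists_regular_extension hd hg hHg hHdeg e
    (by rw [Fintype.card_fin]; omega)
  obtain ⟨Λ, hΛ, hrec⟩ := exists_recursion_solutions hd ℓ
  let φ : Fin (n * 2) ≃ Fin n × Bool := (Fintype.equivFinOfCardEq (by simp)).symm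
  have : Nonempty (Fin n × Bool) := ⟨(⟨0, by omega⟩, false)⟩
  have hcyc : ¬ G.IsAcyclic :=
    not_isAcyclic_of_two_le_ncard fun v => by rw [hreg v]; omega
  refine ⟨G.comap φ, fun v => ?_, fun x hx k hk => ?_, fun r hr => ?_⟩
  · rw [← hreg (φ v)]
    have h : (G.comap φ).neighborSet v = φ ⁻¹' G.neighborSet (φ v) := rfl
    rw [h, Set.ncard_preimage_of_injective_subset_range φ.injective (by simp)]
  · exact hgirth.girthGe hcyc hx k ((Iso.comap φ G).girth_eq.symm.trans hk)
  obtain ⟨Λ', hΛ', hcardΛ'⟩ := Finset.exists_subset_card_eq (hΛ ▸ hr)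
  refine ⟨Λ', hcardΛ', fun μ hμ => ?_⟩
  obtain ⟨f, f0, f1, hf, hfℓ⟩ := hrec μ (hΛ' hμ)
  set x : GluedVertex d ℓ → ℝ := fun v => (if v.tag then -1 else 1) * f (ℓ - v.depth) with hx
  set i : GluedVertex d ℓ → Fin n × Bool := fun u => (e u, false) with hi
  have hinj : Function.Injective i := fun a b hab => e.injective (Prod.ext_iff.1 hab).1
  have hxsum := hG x μ (fun v hv => by
    have h1 : ¬ v.depth < ℓ := fun h => (hHdeep v h ▸ hv).false
    have h2 : ℓ - v.depth = 0 := by omega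
    simp [hx, h2, f0]) (hHeig f μ f0 hf hfℓ)
  refine ⟨(Finset.univ.image (φ.symm ∘ i)).card, ?_, ?_⟩
  · rw [Finset.card_image_of_injective _ (φ.symm.injective.comp hinj), Finset.card_univ]
    exact_mod_cast hUcard
  refine hasLocalizedEigenvector_of_sum_adj (y := Function.extend i x 0 ∘ φ) hε ?_ ?_ ?_
  · let v : GluedVertex d ℓ :=
      ⟨(false, List.replicate (ℓ - 1) ⟨0, by omega⟩), by simp⟩
    refine Function.ne_iff.2 ⟨φ.symm (i v), ?_⟩
    have hv : ℓ - (ℓ - 1) = 1 := by omega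
    simpa [hinj.extend_apply, hx, v, hv] using f1
  · intro q hq
    refine Function.extend_apply' _ _ _ fun ⟨u, hu⟩ => hq ?_
    exact Finset.mem_image.2 ⟨u, Finset.mem_univ u, by simp [hu]⟩
  · intro q
    rw [Function.comp_apply, ← hxsum (φ q), Finset.sum_filter, Finset.sum_filter]
    exact φ.sum_comp fun q' => if G.Adj (φ q) q' then Function.extend i x 0 q' else 0

end Assembly

section Parameters

open Filter

lemma exists_parameters {d : ℕ} (hd : 2 ≤ d) {α m : ℝ} (hα : 0 < α) (hm : 1 ≤ m)
    (hlog : 2 < 2 * α * Real.logb (2 * d - 1) m) :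
    ∃ ℓ g : ℕ, 2 ≤ ℓ ∧ 3 ≤ g ∧ g ≤ 2 * ℓ + 1 ∧ 10 * d * √(2 * d - 1) ^ g < (d : ℝ) ^ ℓ ∧
      (d : ℝ) ^ g ≤ 2 * d * m ^ (2 * α) ∧ (d : ℝ) ^ ℓ ≤ 10 * d ^ 3 * m ^ α ∧
      2 * α * Real.logb (2 * d - 1) m ≤ g ∧ ⌊α * Real.logb d m⌋₊ ≤ ℓ := by
  have hd' : (2 : ℝ) ≤ d := by exact_mod_cast hd
  have hd1 : (1 : ℝ) < d := by linarith
  set B : ℝ := 2 * d - 1 with hB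
  have hB1 : 1 < B := by linarith
  have hm0 : 0 < m := by linarith
  set M : ℝ := m ^ α with hMdef
  have hM : 1 ≤ M := Real.one_le_rpow hm hα.le
  have hM2 : m ^ (2 * α) = M ^ 2 := by rw [mul_comm, Real.rpow_mul hm0.le, Real.rpow_two]
  set g : ℕ := ⌈2 * α * Real.logb B m⌉₊ with hg
  have hBg : B ^ g ≤ B * M ^ 2 := by
    have h1 : (g : ℝ) ≤ 2 * α * Real.logb B m + 1 := (Nat.ceil_lt_add_one (by linarith)).le
    calc B ^ g = B ^ (g : ℝ) := (Real.rpow_natCast B g).symm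
      _ ≤ B ^ (2 * α * Real.logb B m + 1) := Real.rpow_le_rpow_of_exponent_le hB1.le h1
      _ = B * M ^ 2 := by
        rw [Real.rpow_add (by linarith), Real.rpow_one, mul_comm (2 * α), Real.rpow_mul (by linarith),
          Real.rpow_logb (by linarith) hB1.ne' hm0, hM2, mul_comm]
  have hdg : (d : ℝ) ^ g ≤ B ^ g := by gcongr; linarith
  have hsq : (√B ^ g) ^ 2 = B ^ g := by rw [← pow_mul, mul_comm, pow_mul, Real.sq_sqrt (by linarith)]
  have hroot : √B ^ g ≤ d * M := by
    refine le_of_sq_le_sq ?_ (by positivity)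
    rw [hsq]
    refine hBg.trans ?_
    rw [mul_pow]
    gcongr
    nlinarith [sq_nonneg ((d : ℝ) - 1)]
  obtain ⟨k, hk, hk'⟩ := exists_nat_pow_near (x := 10 * (d : ℝ) ^ 2 * M)
    (by nlinarith) hd1
  have hMℓ : d * M < (d : ℝ) ^ (k + 1) := by nlinarith
  refine ⟨k + 1, g, ?_, ?_, ?_, ?_, ?_, ?_, Nat.le_ceil _, ?_⟩
  · refine ((pow_lt_pow_iff_right₀ hd1).1 (lt_of_le_of_lt ?_ hk')).le
    nlinarith
  · exact Nat.lt_ceil.2 (by exact_mod_cast hlog)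
  · refine ((pow_lt_pow_iff_right₀ hd1).1 ?_).le.trans (Nat.le_succ _)
    calc (d : ℝ) ^ g ≤ (√B ^ g) ^ 2 := hsq ▸ hdg
      _ < ((d : ℝ) ^ (k + 1)) ^ 2 := by
        gcongr
        exact hroot.trans_lt hMℓ
      _ = _ := by rw [← pow_mul, mul_comm]
  · calc 10 * d * √B ^ g ≤ 10 * d * (d * M) := by gcongr
      _ = 10 * d ^ 2 * M := by ring
      _ < _ := hk'
  · rw [hM2]
    refine (hdg.trans hBg).trans ?_
    gcongr
    linarith
  · rw [pow_succ]
    calc (d : ℝ) ^ k * d ≤ 10 * d ^ 2 * M * d := by gcongr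
      _ = _ := by ring
  · refine Nat.floor_le_of_le ?_
    rw [← Real.logb_rpow_eq_mul_logb_of_pos hm0, Real.logb_le_iff_le_rpow hd1 (by positivity),
      Real.rpow_natCast]
    nlinarith

lemma eventually_mul_rpow_lt {β : ℝ} (hβ : β < 1) (K : ℝ) : ∀ᶠ x : ℝ in atTop, K * x ^ β < x := by
  filter_upwards [(tendsto_rpow_atTop (sub_pos.2 hβ)).eventually_gt_atTop K,
    eventually_gt_atTop 0] with x hx hx0
  calc K * x ^ β < x ^ (1 - β) * x ^ β := by gcongr
    _ = x := by rw [← Real.rpow_add hx0]; simp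

lemma eventually_exists_graph {d : ℕ} (hd : 2 ≤ d) {α ε : ℝ} (hα : α ∈ Set.Ioo (0 : ℝ) (1 / 6))
    (hε : ε ≤ 1) : ∀ᶠ n : ℕ in atTop, ∃ G : SimpleGraph (Fin (n * 2)), IsRegular G (d + 1) ∧
      girthGe G (2 * α * Real.logb (2 * (d : ℝ) - 1) (n * 2 : ℕ)) ∧
      LocalizedSpectrum G ⌊α * Real.logb d (n * 2 : ℕ)⌋₊ ε
        (20 * d ^ 4 * ((n * 2 : ℕ) : ℝ) ^ α) := by
  have hd' : (2 : ℝ) ≤ d := by exact_mod_cast hd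
  have htend : Tendsto (fun n : ℕ => ((n * 2 : ℕ) : ℝ)) atTop atTop :=
    tendsto_natCast_atTop_atTop.comp (tendsto_id.atTop_mul_const' two_pos)
  have hlog : Tendsto (fun x => 2 * α * Real.logb (2 * (d : ℝ) - 1) x) atTop atTop :=
    (Real.tendsto_logb_atTop (by linarith)).const_mul_atTop (by linarith [hα.1])
  filter_upwards [htend.eventually_ge_atTop 1, htend.eventually (hlog.eventually_gt_atTop 2),
    htend.eventually (eventually_mul_rpow_lt (β := 2 * α) (by linarith [hα.2])
      (2 * (20 * d ^ 4 + 2 + 4 * (d + 1) * (2 * d))))] with n hn1 hnlog hnK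
  obtain ⟨ℓ, g, hℓ, hg, hgℓ, hbig, hdg, hdℓ, hgirth, hfloor⟩ := exists_parameters hd hα.1 hn1 hnlog
  set m : ℝ := ((n * 2 : ℕ) : ℝ) with hm
  have hsize : 2 * (d : ℝ) ^ (ℓ + 1) ≤ 20 * d ^ 4 * m ^ α := by
    rw [pow_succ]
    calc 2 * ((d : ℝ) ^ ℓ * d) ≤ 2 * (10 * d ^ 3 * m ^ α * d) := by gcongr
      _ = _ := by ring
  have hcard : 2 * d ^ (ℓ + 1) + (2 + 4 * (d + 1) * d ^ g) < n := by
    have h1 : m ^ α ≤ m ^ (2 * α) := Real.rpow_le_rpow_of_exponent_le hn1 (by linarith [hα.1])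
    have h2 : 1 ≤ m ^ (2 * α) := Real.one_le_rpow hn1 (by linarith [hα.1])
    have hnm : m = n * 2 := by rw [hm]; push_cast; rfl
    have h3 : 2 * (d : ℝ) ^ (ℓ + 1) + (2 + 4 * (d + 1) * d ^ g) < n := by
      calc 2 * (d : ℝ) ^ (ℓ + 1) + (2 + 4 * (d + 1) * d ^ g)
          ≤ 20 * d ^ 4 * m ^ (2 * α) + (2 * m ^ (2 * α) +
            4 * (d + 1) * (2 * d * m ^ (2 * α))) := by
            refine add_le_add (hsize.trans (by gcongr)) (add_le_add (by linarith) (by gcongr))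
        _ < n := by linarith
    exact_mod_cast h3
  obtain ⟨G, hreg, hG, hspec⟩ := exists_graph_of_parameters hε hd hℓ hg hgℓ hbig hcard
  obtain ⟨Λ, hΛ, h⟩ := hspec _ hfloor
  refine ⟨G, hreg, hG _ hgirth, Λ, hΛ, fun μ hμ => ?_⟩
  obtain ⟨k, hk, hloc⟩ := h μ hμ
  exact ⟨k, hk.trans hsize, hloc⟩

end Parameters

/-- Theorem 1.2, general degrees between consecutive primes. -/
theorem stmt_1 (j : ℕ) (hj : 1 ≤ j) (d : ℕ)
    (hd₁ : nthPrime j ≤ d) (hd₂ : d ≤ nthPrime (j + 1))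
    (α : ℝ) (hα : α ∈ Set.Ioo (0 : ℝ) (1 / 6))
    (hratio : Real.log (nthPrime j) / Real.log (nthPrime (j + 1)) > 6 * α)
    (ε : ℝ) (hε : ε ∈ Set.Ioo (0 : ℝ) 1) :
    ∃ C : ℝ, 0 < C ∧
      {m : ℕ | 0 < m ∧ ∃ G : SimpleGraph (Fin m),
        IsRegular G (d + 1) ∧
        girthGe G (2 * α * Real.logb (2 * (d : ℝ) - 1) m) ∧
        LocalizedSpectrum G ⌊α * Real.logb d m⌋₊ ε (C * (m : ℝ) ^ α)}.Infinite := by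
  have hd : 2 ≤ d := (Nat.prime_nth_prime (j - 1)).two_le.trans hd₁
  refine ⟨20 * d ^ 4, by positivity, Set.infinite_of_forall_exists_gt fun N => ?_⟩
  obtain ⟨n, hn, hN⟩ := ((eventually_exists_graph hd hα hε.2.le).and
    (Filter.eventually_gt_atTop N)).exists
  exact ⟨n * 2, ⟨by omega, hn⟩, by omega⟩

end Formal
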